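/- arXiv:math/0601362 — 3 statements merged into one kernel-verified Lean document; each statement's English description precedes it below -/
import Mathlib

section
/- (ABC Lemma) Let A, B, C be pairwise coprime polynomials in ℂ[z_{1,1},...,z_{n,m}], each nonvanishing on the configuration space ℰⁿ(ℂ^m,gp) ⊂ ℂ^{mn}, at least one of them nonconstant, and satisfying A + B + C = 0. Then there exist distinct indices i_1,...,i_{m-1},j,k,l,s in {1,...,n} and α ∈ ℂ \ {0} such that, with 𝐢 = (i_1,...,i_{m-1}), A = α·d_{𝐢,j,k}·d_{𝐢,l,s}, B = α·d_{𝐢,j,l}·d_{𝐢,s,k}, and C = α·d_{𝐢,j,s}·d_{𝐢,k,l}. -/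
/-- The determinant polynomial `d_{a_1,...,a_{m+1}}` in the variables `z_{i,j}`:
the determinant of the `(m+1)×(m+1)` matrix whose `r`-th row is
`(z_{a_r,1}, ..., z_{a_r,m}, 1)`. -/
noncomputable def dpoly {n m : ℕ} (a : Fin (m + 1) → Fin n) :
    MvPolynomial (Fin n × Fin m) ℂ :=
  (Matrix.of (fun r c : Fin (m + 1) =>
    (Fin.snoc (fun j : Fin m => MvPolynomial.X (a r, j)) 1 :
      Fin (m + 1) → MvPolynomial (Fin n × Fin m) ℂ) c)).det

/-- The affine determinant `d_{a_1,...,a_{m+1}}(q)` for points `q_i ∈ ℂ^m`. -/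
noncomputable def dA {n m : ℕ} (q : Fin n → Fin m → ℂ) (a : Fin (m + 1) → Fin n) : ℂ :=
  (Matrix.of (fun r c : Fin (m + 1) => Fin.snoc (q (a r)) (1 : ℂ) c)).det

/-- `q ∈ ℰⁿ(ℂ^m, gp)`: no `m+1` of the points lie on an affine hyperplane. -/
def GenPos {n m : ℕ} (q : Fin n → Fin m → ℂ) : Prop :=
  ∀ a : Fin (m + 1) → Fin n, Function.Injective a → dA q a ≠ 0

/-!
A determinant polynomial is linear in its corner variable, with leading coefficient a smaller such
determinant that does not divide it; by induction it is irreducible. By the Nullstellensatz `A`, `B`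
and `C` are then products of determinants `d_𝐢`, and coprimality makes the three families of vertex
sets disjoint.

Take points that are generic except that the first coordinate vanishes on a set `I` of indices and
the second on a set `J`. Then `d_K` vanishes exactly when `K` contains no two distinct indices `x`,
`y` with `x ∉ I` and `y ∉ J`. Since `A + B + C = 0`, whenever two of the three polynomials vanish at
such points so does the third. Suitable `I` and `J` show that sets from different families share all
but one of their elements, and then that the three families are the pairs of opposite edges of a
tetrahedron `j k l s` joined to a common set `𝐢`.

It remains to find the coefficients and exponents. Moving the points of `𝐢` over the origin of a
plane turns determinants into wedge products of four plane vectors, and only the Plücker relation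
itself survives among its variants with coefficients and exponents.
-/

open MvPolynomial

section AffineDet

variable {R S : Type*} [CommRing R] [CommRing S] {m : ℕ}

/-- The affine determinant of `m + 1` points of `R ^ m`: the determinant with rows `(p r, 1)`. Both
`dpoly` and `dA` are instances, over the polynomial ring and over `ℂ`. -/
def affineDet (p : Fin (m + 1) → Fin m → R) : R :=
  (Matrix.of fun r c : Fin (m + 1) => (Fin.snoc (p r) 1 : Fin (m + 1) → R) c).det

lemma map_affineDet (f : R →+* S) (p : Fin (m + 1) → Fin m → R) :
    f (affineDet p) = affineDet fun r j => f (p r j) := by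
  rw [affineDet, affineDet, RingHom.map_det]
  congr 1
  ext r c
  cases c using Fin.lastCases <;> simp

lemma affineDet_mem_subring (T : Subring R) {p : Fin (m + 1) → Fin m → R}
    (hp : ∀ r j, p r j ∈ T) : affineDet p ∈ T := by
  have h := map_affineDet T.subtype fun r j => ⟨p r j, hp r j⟩
  exact h ▸ SetLike.coe_mem _

lemma affineDet_comp_perm (σ : Equiv.Perm (Fin (m + 1))) (p : Fin (m + 1) → Fin m → R) :
    affineDet (p ∘ σ) = (Equiv.Perm.sign σ : ℤ) * affineDet p :=
  Matrix.det_permute σ (Matrix.of fun r c => (Fin.snoc (p r) 1 : Fin (m + 1) → R) c)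

lemma affineDet_eq_zero_of_eq {p : Fin (m + 1) → Fin m → R} {r s : Fin (m + 1)} (hrs : r ≠ s)
    (h : p r = p s) : affineDet p = 0 :=
  Matrix.det_zero_of_row_eq hrs (by ext c; simp only [Matrix.of_apply, h])

lemma affineDet_eq_zero_of_forall_perm {p : Fin (m + 1) → Fin m → R}
    (h : ∀ σ : Equiv.Perm (Fin (m + 1)), ∃ j : Fin m, p (σ j.castSucc) j = 0) :
    affineDet p = 0 := by
  rw [affineDet, Matrix.det_apply]
  refine Finset.sum_eq_zero fun σ _ => ?_
  obtain ⟨j, hj⟩ := h σ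
  rw [Finset.prod_eq_zero (Finset.mem_univ j.castSucc) (by simpa using hj), smul_zero]

lemma affineDet_simplex :
    affineDet (fun r (j : Fin m) => if r = j.castSucc then (1 : R) else 0) = 1 := by
  rw [affineDet, Matrix.det_of_isUpperTriangular]
  · refine Finset.prod_eq_one fun r _ => ?_
    cases r using Fin.lastCases <;> simp
  · intro r c hcr
    cases c using Fin.lastCases with
    | last => exact absurd hcr (Fin.le_last r).not_gt
    | cast c => simpa using fun h : r = c.castSucc => absurd hcr h.not_gt

lemma affineDet_succ (p : Fin (m + 2) → Fin (m + 1) → R) :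
    affineDet p = ∑ r : Fin (m + 2),
      (-1) ^ (r : ℕ) * p r 0 * affineDet fun s j => p (r.succAbove s) j.succ := by
  rw [affineDet, Matrix.det_succ_column_zero]
  refine Finset.sum_congr rfl fun r _ => ?_
  have minor : (Matrix.of fun r c => (Fin.snoc (p r) 1 : Fin (m + 2) → R) c).submatrix
      r.succAbove Fin.succ = Matrix.of fun s c => (Fin.snoc (p (r.succAbove s) ∘ Fin.succ) 1 :
        Fin (m + 1) → R) c := by
    ext s c
    cases c using Fin.lastCases <;> simp [Fin.succ_castSucc, -Fin.castSucc_succ]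
  rw [minor, Matrix.of_apply, Fin.snoc_apply_zero]
  rfl

/-- The wedge product `u ∧ v` of two vectors of the plane, as a scalar. -/
def planeWedge (u v : Fin 2 → R) : R := u 0 * v 1 - u 1 * v 0

lemma affineDet_snoc_snoc {p : Fin (m + 1) → Fin (m + 2) → R} (h₀ : ∀ r, p r 0 = 0)
    (h₁ : ∀ r, p r 1 = 0) (x y : Fin (m + 2) → R) :
    affineDet (Fin.snoc (Fin.snoc p x) y : Fin (m + 3) → Fin (m + 2) → R) =
      affineDet (fun r j => p r j.succ.succ) * planeWedge ![x 0, x 1] ![y 0, y 1] := by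
  have minor (z : Fin (m + 2) → R) :
      affineDet (fun r j => (Fin.snoc p z : Fin (m + 2) → Fin (m + 2) → R) r j.succ) =
        (-1) ^ (m + 1) * z 1 * affineDet fun r j => p r j.succ.succ := by
    rw [affineDet_succ, Fin.sum_univ_castSucc]
    simp [h₁]
  have minor' (r : Fin (m + 2)) :
      (Fin.snoc (Fin.snoc p x) y : Fin (m + 3) → Fin (m + 2) → R)
        ((Fin.last (m + 1)).castSucc.succAbove r) =
        (Fin.snoc p y : Fin (m + 2) → Fin (m + 2) → R) r := by
    cases r using Fin.lastCases <;> simp [Fin.succAbove_castSucc_of_lt _ _ (Fin.castSucc_lt_last _)]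
  rw [affineDet_succ, Fin.sum_univ_castSucc, Fin.sum_univ_castSucc]
  simp only [Fin.snoc_castSucc, h₀, mul_zero, zero_mul, Finset.sum_const_zero, zero_add,
    Fin.snoc_last, minor', minor, Fin.succAbove_last, Fin.val_castSucc, Fin.val_last, planeWedge,
    Matrix.cons_val_zero, Matrix.cons_val_one]
  have hsq : ((-1 : R) ^ (m + 1)) ^ 2 = 1 := by rw [pow_right_comm, neg_one_sq, one_pow]
  linear_combination
    (x 0 * y 1 - x 1 * y 0) * affineDet (fun r j => p r j.succ.succ) * hsq

end AffineDet

section Irreducible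

variable {R σ : Type*} [CommRing R] {m : ℕ}

lemma affineDet_X_mem_supported {s : Set σ} {v : Fin (m + 1) → Fin m → σ} (hv : ∀ r j, v r j ∈ s) :
    affineDet (fun r j => (X (v r j) : MvPolynomial σ R)) ∈ supported R s :=
  affineDet_mem_subring (supported R s).toSubring fun r j =>
    Algebra.subset_adjoin (Set.mem_image_of_mem X (hv r j))

lemma exists_comp_eq_of_injective2 {α β γ δ : Type*} [Nonempty δ] {v : α → β → γ}
    (hv : Function.Injective2 v) (t : α → β → δ) : ∃ p : γ → δ, ∀ r j, p (v r j) = t r j := by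
  obtain ⟨p, hp⟩ := hv.uncurry.surjective_comp_right (Function.uncurry t)
  exact ⟨p, fun r j => congrFun hp (r, j)⟩

lemma affineDet_X_ne_zero [Nontrivial R] {v : Fin (m + 1) → Fin m → σ}
    (hv : Function.Injective2 v) : affineDet (fun r j => (X (v r j) : MvPolynomial σ R)) ≠ 0 := by
  obtain ⟨p, hp⟩ := exists_comp_eq_of_injective2 hv fun r j => if r = j.castSucc then (1 : R) else 0
  intro h
  have := congrArg (eval p) h
  simp [map_affineDet, hp, affineDet_simplex] at this

lemma exists_affineDet_X_eq_mul_X_add {v : Fin (m + 2) → Fin (m + 1) → σ}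
    (hv : Function.Injective2 v) :
    ∃ g ∈ supported R {v 0 0}ᶜ, affineDet (fun r j => X (v r j)) =
      affineDet (fun r j => X (v r.succ j.succ)) * X (v 0 0) + g := by
  have hne {r j} (h : r ≠ 0 ∨ j ≠ 0) : v r j ∈ ({v 0 0}ᶜ : Set σ) :=
    fun h' => h.elim (· (hv h').1) (· (hv h').2)
  refine ⟨∑ r : Fin (m + 1), (-1) ^ ((r.succ : Fin (m + 2)) : ℕ) * X (v r.succ 0) *
    affineDet fun s j => X (v (r.succ.succAbove s) j.succ), ?_, ?_⟩
  · refine sum_mem fun r _ => mul_mem (mul_mem (pow_mem (neg_mem (one_mem _)) _) ?_) ?_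
    · exact Algebra.subset_adjoin (Set.mem_image_of_mem X (hne (.inl r.succ_ne_zero)))
    · exact affineDet_X_mem_supported fun s j => hne (.inr j.succ_ne_zero)
  · rw [affineDet_succ, Fin.sum_univ_succ]
    simp [mul_comm]

lemma irreducible_affineDet_X_of_isRelPrime [IsDomain R] {v : Fin (m + 2) → Fin (m + 1) → σ}
    (hv : Function.Injective2 v)
    (h : IsRelPrime (affineDet fun r j => (X (v r.succ j.succ) : MvPolynomial σ R))
      (affineDet fun r j => X (v r j))) :
    Irreducible (affineDet fun r j => (X (v r j) : MvPolynomial σ R)) := by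
  have notMem_vars {f : MvPolynomial σ R} (hf : f ∈ supported R {v 0 0}ᶜ) : v 0 0 ∉ f.vars :=
    fun hmem => mem_supported.mp hf hmem rfl
  obtain ⟨g, hg, hdet⟩ := exists_affineDet_X_eq_mul_X_add (R := R) hv
  rw [hdet] at h ⊢
  refine irreducible_mul_X_add _ g (v 0 0) (affineDet_X_ne_zero ?_) (notMem_vars ?_)
    (notMem_vars hg) ?_
  · exact fun r r' j j' hrj => by simpa using hv hrj
  · exact affineDet_X_mem_supported fun r j hrj => j.succ_ne_zero (hv hrj).2
  · simpa using h

lemma not_affineDet_X_succ_dvd [Nontrivial R] {v : Fin (m + 3) → Fin (m + 2) → σ}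
    (hv : Function.Injective2 v) :
    ¬ affineDet (fun r j => (X (v r.succ j.succ) : MvPolynomial σ R)) ∣
      affineDet fun r j => X (v r j) := by
  let t : Fin (m + 3) → Fin (m + 2) → R := fun r j => if r = j.castSucc then 1 else 0
  obtain ⟨p, hp⟩ := exists_comp_eq_of_injective2 hv (t ∘ Equiv.swap 0 1)
  intro hdvd
  have hfull : eval p (affineDet fun r j => X (v r j)) = -1 := by
    have hdet := affineDet_comp_perm (Equiv.swap 0 1) t
    rw [affineDet_simplex, Equiv.Perm.sign_swap Fin.zero_ne_one] at hdet
    simpa [map_affineDet, hp, Function.comp_def] using hdet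
  have hminor : eval p (affineDet fun r j => X (v r.succ j.succ)) = 0 := by
    rw [map_affineDet]
    have hlast : Equiv.swap (0 : Fin (m + 3)) 1 (Fin.last (m + 1)).succ = Fin.last (m + 2) :=
      Equiv.swap_apply_of_ne_of_ne (Fin.succ_ne_zero _) (by simp [Fin.ext_iff])
    have hfirst : Equiv.swap (0 : Fin (m + 3)) 1 (0 : Fin (m + 2)).succ = 0 :=
      Equiv.swap_apply_right 0 1
    refine affineDet_eq_zero_of_eq (Fin.last_pos (n := m)).ne (funext fun j => ?_)
    have hzero : (0 : Fin (m + 3)) ≠ j.succ.castSucc :=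
      (Fin.castSucc_ne_zero_iff.mpr j.succ_ne_zero).symm
    simp only [eval_X, hp, Function.comp_apply, t, hlast, hfirst, if_neg hzero,
      if_neg (Fin.castSucc_lt_last j.succ).ne']
  have := map_dvd (eval p) hdvd
  rw [hfull, hminor, zero_dvd_iff] at this
  simp at this

theorem irreducible_affineDet_X [IsDomain R] {v : Fin (m + 2) → Fin (m + 1) → σ}
    (hv : Function.Injective2 v) :
    Irreducible (affineDet fun r j => (X (v r j) : MvPolynomial σ R)) := by
  induction m with
  | zero =>
    refine irreducible_affineDet_X_of_isRelPrime hv ?_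
    have minor : affineDet (fun r j => (X (v r.succ j.succ) : MvPolynomial σ R)) = 1 :=
      (congrArg affineDet (Subsingleton.elim _ _)).trans affineDet_simplex
    exact minor ▸ isRelPrime_one_left
  | succ m ih =>
    have hminor := ih (v := fun r j => v r.succ j.succ) fun r r' j j' h => by simpa using hv h
    exact irreducible_affineDet_X_of_isRelPrime hv
      (hminor.isRelPrime_iff_not_dvd.mpr (not_affineDet_X_succ_dvd hv))

end Irreducible

section SpecialPosition

variable {ι : Type*} {m : ℕ}

/-- The combinatorial condition for the simplex with vertex set `K` to degenerate when the points
are generic subject to the first coordinate vanishing on `I` and the second on `J`. -/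
def IsDegenerate (I J K : Finset ι) : Prop :=
  ∀ x ∈ K, ∀ y ∈ K, x ∉ I → y ∉ J → x = y

lemma isDegenerate_empty_right {I K : Finset ι} (hK : 1 < K.card) :
    IsDegenerate I ∅ K ↔ K ⊆ I := by
  refine ⟨fun h x hx => ?_, fun h x hx _ _ hxI => absurd (h hx) hxI⟩
  by_contra hxI
  obtain ⟨y, hy, hyx⟩ := Finset.exists_mem_ne hK x
  exact hyx (h x hx y hy hxI (Finset.notMem_empty y)).symm

variable [DecidableEq ι] (I J : Finset ι) (R : Type*) [CommRing R] {a : Fin (m + 3) → ι}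

/-- The generic points of `R ^ (m + 2)` indexed by `ι`, subject to the first coordinate vanishing
on `I` and the second on `J`. -/
noncomputable def maskedPoints (i : ι) (j : Fin (m + 2)) : MvPolynomial (ι × Fin (m + 2)) R :=
  if j = 0 ∧ i ∈ I ∨ j = 1 ∧ i ∈ J then 0 else X (i, j)

variable {I J}

lemma affineDet_maskedPoints_eq_zero (ha : Function.Injective a)
    (h : IsDegenerate I J (Finset.univ.image a)) :
    affineDet (maskedPoints I J R ∘ a) = 0 := by
  refine affineDet_eq_zero_of_forall_perm fun σ => ?_
  by_contra! hne
  have hI : a (σ 0) ∉ I := fun hmem => hne 0 (if_pos (.inl ⟨rfl, hmem⟩))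
  have hJ : a (σ 1) ∉ J := fun hmem => hne 1 (if_pos (.inr ⟨rfl, hmem⟩))
  have heq := h _ (Finset.mem_image_of_mem a (Finset.mem_univ _)) _
    (Finset.mem_image_of_mem a (Finset.mem_univ _)) hI hJ
  exact Fin.zero_ne_one (σ.injective (ha heq))

lemma affineDet_maskedPoints_ne_zero [Nontrivial R] (ha : Function.Injective a)
    (h : ¬ IsDegenerate I J (Finset.univ.image a)) :
    affineDet (maskedPoints I J R ∘ a) ≠ 0 := by
  simp only [IsDegenerate, Finset.mem_image, Finset.mem_univ, true_and] at h
  push Not at h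
  obtain ⟨_, ⟨r, rfl⟩, _, ⟨s, rfl⟩, hr, hs, hrs⟩ := h
  obtain ⟨σ, rfl, rfl⟩ : ∃ σ : Equiv.Perm (Fin (m + 3)), σ 0 = r ∧ σ 1 = s :=
    MulAction.is_two_pretransitive_iff.mp (Equiv.Perm.isMultiplyPretransitive _ 2)
      Fin.zero_ne_one (ne_of_apply_ne a hrs)
  let simplex : ι × Fin (m + 2) → R := fun v => if v.1 = a (σ v.2.castSucc) then 1 else 0
  have heval (r : Fin (m + 3)) (j : Fin (m + 2)) :
      eval simplex (maskedPoints I J R (a (σ r)) j) = if r = j.castSucc then 1 else 0 := by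
    unfold maskedPoints
    split_ifs with hmask hrj hrj
    · subst hrj
      rcases hmask with ⟨rfl, hmem⟩ | ⟨rfl, hmem⟩
      · exact absurd hmem hr
      · exact absurd hmem hs
    · simp
    · simp [simplex, hrj]
    · simp [simplex, ha.eq_iff, hrj]
  have hdet : eval simplex (affineDet ((maskedPoints I J R ∘ a) ∘ σ)) = 1 := by
    simp only [map_affineDet, Function.comp_apply, heval, affineDet_simplex]
  intro hzero
  rw [affineDet_comp_perm, hzero, mul_zero, map_zero] at hdet
  exact zero_ne_one hdet

theorem exists_affineDet_eq_zero_iff_isDegenerate (k : Type*) [Field k] [Infinite k] [Finite ι]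
    (m : ℕ) (I J : Finset ι) :
    ∃ q : ι → Fin (m + 2) → k, ∀ a : Fin (m + 3) → ι, Function.Injective a →
      (affineDet (q ∘ a) = 0 ↔ IsDegenerate I J (Finset.univ.image a)) := by
  classical
  cases nonempty_fintype ι
  let D (a : Fin (m + 3) → ι) : MvPolynomial (ι × Fin (m + 2)) k :=
    affineDet (maskedPoints I J k ∘ a)
  obtain ⟨p, hp⟩ : ∃ p, eval p (∏ a with D a ≠ 0, D a) ≠ 0 := by
    by_contra! h
    exact Finset.prod_ne_zero_iff.mpr (fun a ha => (Finset.mem_filter.mp ha).2)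
      (MvPolynomial.funext fun x => (h x).trans (map_zero _).symm)
  have hD (a) : eval p (D a) = affineDet ((fun i j => eval p (maskedPoints I J k i j)) ∘ a) :=
    map_affineDet _ _
  refine ⟨fun i j => eval p (maskedPoints I J k i j), fun a ha => ⟨fun h => ?_, fun h => ?_⟩⟩
  · by_contra hdeg
    rw [map_prod, Finset.prod_ne_zero_iff] at hp
    have hDa : D a ≠ 0 := affineDet_maskedPoints_ne_zero k ha hdeg
    exact hp a (by simpa using hDa) ((hD a).trans h)
  · rw [← hD, show D a = 0 from affineDet_maskedPoints_eq_zero k ha h, map_zero]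

end SpecialPosition

section PrimeFactors

lemma exists_associated_pow_mul_pow {α : Type*} [CommMonoidWithZero α]
    [UniqueFactorizationMonoid α] {P x y : α} (hP : P ≠ 0)
    (h : ∀ p, Prime p → p ∣ P → Associated p x ∨ Associated p y) :
    ∃ e f : ℕ, Associated P (x ^ e * y ^ f) := by
  induction P using UniqueFactorizationMonoid.induction_on_prime with
  | h₁ => exact absurd rfl hP
  | h₂ u hu => exact ⟨0, 0, by simpa using associated_one_iff_isUnit.mpr hu⟩
  | h₃ Q p hQ hp ih =>
    obtain ⟨e, f, hef⟩ := ih hQ fun p' hp' hdvd => h p' hp' (hdvd.mul_left p)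
    rcases h p hp (dvd_mul_right p Q) with hpx | hpy
    · exact ⟨e + 1, f, by simpa only [pow_succ', mul_assoc] using hpx.mul_mul hef⟩
    · exact ⟨e, f + 1, by simpa only [pow_succ', mul_left_comm] using hpy.mul_mul hef⟩

lemma ne_zero_of_dvd_pow_mul_pow {α : Type*} [CommMonoidWithZero α] {x y : α} {e f : ℕ}
    (hx : Prime x) (hxy : ¬ x ∣ y) (h : x ∣ x ^ e * y ^ f) : e ≠ 0 := by
  rintro rfl
  exact hxy (hx.dvd_of_dvd_pow (by simpa using h))

lemma exists_associated_of_forall_eval_eq_zero {σ k κ : Type*} [Finite σ] [Finite κ] [Field k]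
    [IsAlgClosed k] {p : MvPolynomial σ k} (hp : Prime p) {f : κ → MvPolynomial σ k}
    (hf : ∀ i, Irreducible (f i)) (h : ∀ x, eval x p = 0 → ∃ i, eval x (f i) = 0) :
    ∃ i, Associated p (f i) := by
  cases nonempty_fintype κ
  have hrad : ∏ i, f i ∈ (Ideal.span {p}).radical := by
    rw [← vanishingIdeal_zeroLocus_eq_radical (K := k), mem_vanishingIdeal_iff]
    intro x hx
    have hpx : aeval x p = 0 := mem_zeroLocus_iff.mp hx p (Ideal.mem_span_singleton_self p)
    obtain ⟨i, hi⟩ := h x hpx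
    exact (map_prod (eval x) f Finset.univ).trans (Finset.prod_eq_zero (Finset.mem_univ i) hi)
  obtain ⟨N, hN⟩ := hrad
  obtain ⟨i, -, hpi⟩ :=
    hp.exists_mem_finset_dvd (hp.dvd_of_dvd_pow (Ideal.mem_span_singleton.mp hN))
  exact ⟨i, hp.irreducible.associated_of_dvd (hf i) hpi⟩

lemma exists_eq_C_mul_of_associated {σ k : Type*} [Field k] {P Q : MvPolynomial σ k}
    (h : Associated P Q) : ∃ c : k, c ≠ 0 ∧ P = C c * Q := by
  obtain ⟨u, rfl⟩ := h.symm
  obtain ⟨c, hc, hu⟩ := isUnit_iff_eq_C_of_isReduced.mp u.isUnit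
  exact ⟨c, hc.ne_zero, by rw [hu, mul_comm]⟩

end PrimeFactors

section SimplexDivisors

variable {n m : ℕ}

lemma eval_dpoly (q : Fin n → Fin m → ℂ) (a : Fin (m + 1) → Fin n) :
    eval (fun v => q v.1 v.2) (dpoly a) = affineDet (q ∘ a) :=
  (map_affineDet _ _).trans (by simp only [eval_X]; rfl)

lemma irreducible_dpoly {a : Fin (m + 2) → Fin n} (ha : Function.Injective a) :
    Irreducible (dpoly a) :=
  irreducible_affineDet_X (v := fun r j => (a r, j)) fun _ _ _ _ h =>
    ⟨ha (congrArg Prod.fst h), congrArg Prod.snd h⟩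

lemma dpoly_dvd_dpoly_of_image_eq {a b : Fin (m + 1) → Fin n} (ha : Function.Injective a)
    (hb : Function.Injective b) (h : Finset.univ.image a = Finset.univ.image b) :
    dpoly a ∣ dpoly b := by
  have hrange : Set.range b = Set.range a := by
    simpa [← Finset.coe_inj] using h.symm
  let σ : Equiv.Perm (Fin (m + 1)) :=
    (Equiv.ofInjective b hb).trans ((Equiv.setCongr hrange).trans (Equiv.ofInjective a ha).symm)
  have hσ : a ∘ σ = b := funext fun r => Equiv.apply_ofInjective_symm ha _
  rw [← hσ]
  exact Dvd.intro_left _ (affineDet_comp_perm σ fun r j => X (a r, j)).symm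

lemma card_image_univ {α : Type*} [DecidableEq α] {r : ℕ} {a : Fin r → α}
    (ha : Function.Injective a) : (Finset.univ.image a).card = r := by
  rw [Finset.card_image_of_injective _ ha, Finset.card_univ, Fintype.card_fin]

lemma image_eq_of_dpoly_dvd_dpoly {a b : Fin (m + 3) → Fin n} (ha : Function.Injective a)
    (hb : Function.Injective b) (h : dpoly a ∣ dpoly b) :
    Finset.univ.image a = Finset.univ.image b := by
  obtain ⟨q, hq⟩ := exists_affineDet_eq_zero_iff_isDegenerate ℂ m (Finset.univ.image a) ∅
  have hcard := (card_image_univ ha).trans (card_image_univ hb).symm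
  have hlt : 1 < (Finset.univ.image b).card := by simp [card_image_univ hb]
  have ha0 : affineDet (q ∘ a) = 0 :=
    (hq a ha).mpr ((isDegenerate_empty_right (hcard ▸ hlt)).mpr subset_rfl)
  have hb0 : affineDet (q ∘ b) = 0 := by
    have hmap := map_dvd (eval fun v => q v.1 v.2) h
    rwa [eval_dpoly, eval_dpoly, ha0, zero_dvd_iff] at hmap
  have hsub := (isDegenerate_empty_right hlt).mp ((hq b hb).mp hb0)
  exact (Finset.eq_of_subset_of_card_le hsub hcard.le).symm

/-- `P` has no zero on the configuration space `ℰⁿ(ℂ^m, gp)`. -/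
def NonvanishingOnGenPos (P : MvPolynomial (Fin n × Fin m) ℂ) : Prop :=
  ∀ q : Fin n → Fin m → ℂ, GenPos q → eval (fun v => q v.1 v.2) P ≠ 0

/-- The vertex sets of the simplices whose determinant polynomials divide `P`. The ordering of the
vertices is forgotten because it only affects the sign of the determinant. -/
def simplexDivisors (P : MvPolynomial (Fin n × Fin m) ℂ) : Set (Finset (Fin n)) :=
  {K | ∃ a : Fin (m + 1) → Fin n, Function.Injective a ∧ Finset.univ.image a = K ∧ dpoly a ∣ P}

lemma image_mem_simplexDivisors {P : MvPolynomial (Fin n × Fin m) ℂ} {a : Fin (m + 1) → Fin n}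
    (ha : Function.Injective a) : Finset.univ.image a ∈ simplexDivisors P ↔ dpoly a ∣ P :=
  ⟨fun ⟨_, hb, hab, hdvd⟩ => (dpoly_dvd_dpoly_of_image_eq ha hb hab.symm).trans hdvd,
    fun h => ⟨a, ha, rfl, h⟩⟩

lemma card_eq_of_mem_simplexDivisors {P : MvPolynomial (Fin n × Fin m) ℂ} {K : Finset (Fin n)}
    (hK : K ∈ simplexDivisors P) : K.card = m + 1 := by
  obtain ⟨a, ha, rfl, -⟩ := hK
  exact card_image_univ ha

lemma disjoint_simplexDivisors {P Q : MvPolynomial (Fin n × Fin (m + 1)) ℂ}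
    (h : IsRelPrime P Q) : Disjoint (simplexDivisors P) (simplexDivisors Q) := by
  refine Set.disjoint_left.mpr ?_
  rintro _ ⟨a, ha, rfl, haP⟩ haQ
  exact (irreducible_dpoly ha).not_isUnit (h haP ((image_mem_simplexDivisors ha).mp haQ))

namespace NonvanishingOnGenPos

lemma of_dvd {P Q : MvPolynomial (Fin n × Fin m) ℂ} (hP : NonvanishingOnGenPos P) (h : Q ∣ P) :
    NonvanishingOnGenPos Q :=
  fun q hq h0 => hP q hq (zero_dvd_iff.mp (h0 ▸ map_dvd _ h))

lemma exists_associated_dpoly {P : MvPolynomial (Fin n × Fin (m + 1)) ℂ} (hP : Prime P)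
    (h : NonvanishingOnGenPos P) : ∃ a, Function.Injective a ∧ Associated P (dpoly a) := by
  obtain ⟨⟨a, ha⟩, hPa⟩ := exists_associated_of_forall_eval_eq_zero hP
    (f := fun a : {a : Fin (m + 2) → Fin n // Function.Injective a} => dpoly a.1)
    (fun a => irreducible_dpoly a.2) fun x hx => by
      have hx' : ¬ GenPos fun i j => x (i, j) := fun hgen => h _ hgen hx
      simp only [GenPos, not_forall, not_not] at hx'
      obtain ⟨a, ha, h0⟩ := hx'
      exact ⟨⟨a, ha⟩, (eval_dpoly (fun i j => x (i, j)) a).trans h0⟩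
  exact ⟨a, ha, hPa⟩

variable {P : MvPolynomial (Fin n × Fin (m + 2)) ℂ}

lemma ne_zero (h : NonvanishingOnGenPos P) : P ≠ 0 := by
  rintro rfl
  obtain ⟨q, hq⟩ := exists_affineDet_eq_zero_iff_isDegenerate ℂ m (∅ : Finset (Fin n)) ∅
  refine h q (fun a ha h0 => ?_) (map_zero _)
  have hcard := card_image_univ ha
  have hsub := (isDegenerate_empty_right (by lia)).mp ((hq a ha).mp h0)
  rw [Finset.subset_empty.mp hsub, Finset.card_empty] at hcard
  lia

lemma eval_eq_zero_iff (h : NonvanishingOnGenPos P) (x : Fin n × Fin (m + 2) → ℂ) :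
    eval x P = 0 ↔ ∃ a, Function.Injective a ∧ dpoly a ∣ P ∧ eval x (dpoly a) = 0 := by
  refine ⟨fun hx => ?_, fun ⟨a, _, hdvd, ha⟩ => zero_dvd_iff.mp (ha ▸ map_dvd (eval x) hdvd)⟩
  obtain ⟨f, hf, hfP⟩ := UniqueFactorizationMonoid.exists_prime_factors P h.ne_zero
  have hprod : (f.map (eval x)).prod = 0 := by
    rw [← map_multiset_prod, ← zero_dvd_iff, ← hx]
    exact map_dvd _ hfP.symm.dvd
  obtain ⟨p, hp, hpx⟩ := Multiset.mem_map.mp (Multiset.prod_eq_zero_iff.mp hprod)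
  have hpP : p ∣ P := (Multiset.dvd_prod hp).trans hfP.dvd
  obtain ⟨a, ha, hpa⟩ := exists_associated_dpoly (hf p hp) (h.of_dvd hpP)
  exact ⟨a, ha, hpa.symm.dvd.trans hpP, zero_dvd_iff.mp (hpx ▸ map_dvd (eval x) hpa.dvd)⟩

lemma simplexDivisors_nonempty (h : NonvanishingOnGenPos P) (hP : P.totalDegree ≠ 0) :
    (simplexDivisors P).Nonempty := by
  have hunit : ¬ IsUnit P := fun hunit => by
    obtain ⟨c, -, rfl⟩ := isUnit_iff_eq_C_of_isReduced.mp hunit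
    exact hP (totalDegree_C c)
  obtain ⟨p, hp, hpP⟩ := WfDvdMonoid.exists_irreducible_factor hunit h.ne_zero
  obtain ⟨a, ha, hpa⟩ := exists_associated_dpoly hp.prime (h.of_dvd hpP)
  exact ⟨_, a, ha, rfl, hpa.symm.dvd.trans hpP⟩

lemma exists_eq_C_mul_pow_mul_pow {a b : Fin (m + 3) → Fin n} (h : NonvanishingOnGenPos P)
    (ha : Function.Injective a) (hb : Function.Injective b)
    (hab : Finset.univ.image a ≠ Finset.univ.image b)
    (hP : simplexDivisors P = {Finset.univ.image a, Finset.univ.image b}) :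
    ∃ (c : ℂ) (e f : ℕ), c ≠ 0 ∧ e ≠ 0 ∧ P = C c * dpoly a ^ e * dpoly b ^ f := by
  have haP : dpoly a ∣ P := (image_mem_simplexDivisors ha).mp (by simp [hP])
  obtain ⟨e, f, hef⟩ := exists_associated_pow_mul_pow h.ne_zero (x := dpoly a) (y := dpoly b)
    fun p hp hpP => by
      obtain ⟨a', ha', hpa'⟩ := exists_associated_dpoly hp (h.of_dvd hpP)
      have hmem := (image_mem_simplexDivisors ha').mpr (hpa'.symm.dvd.trans hpP)
      rw [hP] at hmem
      exact hmem.imp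
        (fun heq => hp.irreducible.associated_of_dvd (irreducible_dpoly ha)
          (hpa'.dvd.trans (dpoly_dvd_dpoly_of_image_eq ha' ha heq)))
        (fun heq => hp.irreducible.associated_of_dvd (irreducible_dpoly hb)
          (hpa'.dvd.trans (dpoly_dvd_dpoly_of_image_eq ha' hb heq)))
  have he : e ≠ 0 := ne_zero_of_dvd_pow_mul_pow (irreducible_dpoly ha).prime
    (fun hdvd => hab (image_eq_of_dpoly_dvd_dpoly ha hb hdvd)) (haP.trans hef.dvd)
  obtain ⟨c, hc, hPc⟩ := exists_eq_C_mul_of_associated hef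
  exact ⟨c, e, f, hc, he, by rw [hPc, mul_assoc]⟩

end NonvanishingOnGenPos

end SimplexDivisors

section Triad

open Finset

variable {ι : Type*}

section Card

variable [DecidableEq ι]

lemma card_inter_insert_insert {R : Finset ι} {x y : ι} (hx : x ∉ R) (hy : y ∉ R) (hxy : x ≠ y)
    (X : Finset ι) : #(X ∩ insert x (insert y R)) =
      (if x ∈ X then 1 else 0) + (if y ∈ X then 1 else 0) + #(X ∩ R) := by
  by_cases hxX : x ∈ X <;> by_cases hyX : y ∈ X <;>
    simp [inter_insert_of_mem, inter_insert_of_notMem, hxX, hyX, hx, hy, hxy] <;> lia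

lemma eq_insert_insert {R X : Finset ι} {x y : ι} (hx : x ∉ R) (hy : y ∉ R) (hxy : x ≠ y)
    (hX : #X ≤ #R + 2) (hxX : x ∈ X) (hyX : y ∈ X) (hR : #R ≤ #(X ∩ R)) :
    X = insert x (insert y R) := by
  have hRX : R ⊆ X := inter_eq_right.mp (eq_of_subset_of_card_le inter_subset_right hR)
  refine (eq_of_subset_of_card_le (insert_subset hxX (insert_subset hyX hRX)) ?_).symm
  rwa [card_insert_of_notMem (by simp [hx, hxy]), card_insert_of_notMem hy]

lemma eq_or_eq_of_card_inter {r : ℕ} {R X : Finset ι} {j k l s : ι} (hR : #R = r)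
    (hX : #X = r + 2) (hnodup : [j, k, l, s].Nodup) (hout : ∀ x ∈ [j, k, l, s], x ∉ R)
    (hjl : #(X ∩ insert j (insert l R)) = r + 1) (hjs : #(X ∩ insert j (insert s R)) = r + 1)
    (hkl : #(X ∩ insert k (insert l R)) = r + 1) (hks : #(X ∩ insert k (insert s R)) = r + 1) :
    X = insert j (insert k R) ∨ X = insert l (insert s R) := by
  simp only [List.nodup_cons, List.mem_cons, List.not_mem_nil, or_false, not_or] at hnodup
  simp only [List.forall_mem_cons] at hout
  obtain ⟨⟨hjk', hjl', hjs'⟩, ⟨hkl', hks'⟩, hls', -⟩ := hnodup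
  obtain ⟨hj, hk, hl, hs, -⟩ := hout
  have hle : #(X ∩ R) ≤ r := hR ▸ card_le_card inter_subset_right
  have hall : #(X ∩ insert j (insert k (insert l (insert s R)))) ≤ r + 2 :=
    hX ▸ card_le_card inter_subset_left
  rw [card_inter_insert_insert (by simp [*]) (by simp [*]) hjk',
    card_inter_insert_insert hl hs hls'] at hall
  rw [card_inter_insert_insert hj hl hjl'] at hjl
  rw [card_inter_insert_insert hj hs hjs'] at hjs
  rw [card_inter_insert_insert hk hl hkl'] at hkl
  rw [card_inter_insert_insert hk hs hks'] at hks
  by_cases hjX : j ∈ X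
  · have hkX : k ∈ X := by by_contra hkX; simp only [hjX, hkX, if_true, if_false] at hjl hkl; lia
    refine .inl (eq_insert_insert hj hk hjk' (by lia) hjX hkX ?_)
    split_ifs at * <;> lia
  · have hlX : l ∈ X := by by_contra hlX; simp only [hjX, hlX, if_false] at hjl; lia
    have hsX : s ∈ X := by by_contra hsX; simp only [hjX, hsX, if_false] at hjs; lia
    refine .inr (eq_insert_insert hl hs hls' (by lia) hlX hsX ?_)
    split_ifs at * <;> lia

end Card

/-- The combinatorial shadow of a coprime relation `A + B + C = 0`: three disjoint families of
`(r + 2)`-element sets such that any special position degenerating members of two of the families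
degenerates a member of the third. -/
structure IsTriad (r : ℕ) (𝒜 ℬ 𝒞 : Set (Finset ι)) : Prop where
  card_left : ∀ K ∈ 𝒜, #K = r + 2
  card_mid : ∀ K ∈ ℬ, #K = r + 2
  card_right : ∀ K ∈ 𝒞, #K = r + 2
  disjoint_left_mid : Disjoint 𝒜 ℬ
  disjoint_mid_right : Disjoint ℬ 𝒞
  disjoint_right_left : Disjoint 𝒞 𝒜
  exists_left : ∀ I J, (∃ K ∈ ℬ, IsDegenerate I J K) → (∃ K ∈ 𝒞, IsDegenerate I J K) →
    ∃ K ∈ 𝒜, IsDegenerate I J K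
  exists_mid : ∀ I J, (∃ K ∈ 𝒞, IsDegenerate I J K) → (∃ K ∈ 𝒜, IsDegenerate I J K) →
    ∃ K ∈ ℬ, IsDegenerate I J K
  exists_right : ∀ I J, (∃ K ∈ 𝒜, IsDegenerate I J K) → (∃ K ∈ ℬ, IsDegenerate I J K) →
    ∃ K ∈ 𝒞, IsDegenerate I J K

namespace IsTriad

variable {r : ℕ} {𝒜 ℬ 𝒞 : Set (Finset ι)}

lemma rotate (h : IsTriad r 𝒜 ℬ 𝒞) : IsTriad r ℬ 𝒞 𝒜 where
  card_left := h.card_mid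
  card_mid := h.card_right
  card_right := h.card_left
  disjoint_left_mid := h.disjoint_mid_right
  disjoint_mid_right := h.disjoint_right_left
  disjoint_right_left := h.disjoint_left_mid
  exists_left := h.exists_mid
  exists_mid := h.exists_right
  exists_right := h.exists_left

lemma swap (h : IsTriad r 𝒜 ℬ 𝒞) : IsTriad r ℬ 𝒜 𝒞 where
  card_left := h.card_mid
  card_mid := h.card_left
  card_right := h.card_right
  disjoint_left_mid := h.disjoint_left_mid.symm
  disjoint_mid_right := h.disjoint_right_left.symm
  disjoint_right_left := h.disjoint_mid_right.symm
  exists_left I J hA hC := h.exists_mid I J hC hA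
  exists_mid I J hC hB := h.exists_left I J hB hC
  exists_right I J hB hA := h.exists_right I J hA hB

lemma exists_subset_mem (h : IsTriad r 𝒜 ℬ 𝒞) {I J T : Finset ι} (hI : I ∈ 𝒜) (hJ : J ∈ ℬ)
    (hIT : I ⊆ T) (hJT : J ⊆ T) : ∃ K ∈ 𝒞, K ⊆ T := by
  obtain ⟨K, hK, hdeg⟩ := h.exists_right T ∅ ⟨I, hI, fun _ hx _ _ hxT => absurd (hIT hx) hxT⟩
    ⟨J, hJ, fun _ hx _ _ hxT => absurd (hJT hx) hxT⟩
  exact ⟨K, hK, (isDegenerate_empty_right (by have := h.card_right K hK; lia)).mp hdeg⟩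

variable [DecidableEq ι]

lemma card_inter (h : IsTriad r 𝒜 ℬ 𝒞) {I J : Finset ι} (hI : I ∈ 𝒜) (hJ : J ∈ ℬ) :
    #(I ∩ J) = r + 1 := by
  have hIcard := h.card_left I hI
  have hJcard := h.card_mid J hJ
  have hlt : #(I ∩ J) < r + 2 := by
    refine hIcard ▸ card_lt_card (inter_subset_left.ssubset_of_ne fun heq => ?_)
    have hIJ : I = J := eq_of_subset_of_card_le (inter_eq_left.mp heq) (by lia)
    exact Set.disjoint_left.mp h.disjoint_left_mid hI (hIJ ▸ hJ)
  obtain ⟨K, hK, hdeg⟩ := h.exists_right I J ⟨I, hI, fun _ hx _ _ hxI => absurd hx hxI⟩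
    ⟨J, hJ, fun _ _ _ hy _ hyJ => absurd hy hyJ⟩
  have hKcard := h.card_right K hK
  obtain ⟨x, hx, hxI⟩ : ∃ x ∈ K, x ∉ I := not_subset.mp fun hsub =>
    Set.disjoint_left.mp h.disjoint_right_left hK
      (eq_of_subset_of_card_le hsub (by lia) ▸ hI)
  obtain ⟨y, hy, hyJ⟩ : ∃ y ∈ K, y ∉ J := not_subset.mp fun hsub =>
    Set.disjoint_left.mp h.disjoint_mid_right (eq_of_subset_of_card_le hsub (by lia) ▸ hJ) hK
  obtain rfl : x = y := hdeg x hx y hy hxI hyJ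
  have hsub : K.erase x ⊆ I ∩ J := fun z hz => by
    obtain ⟨hzx, hzK⟩ := mem_erase.mp hz
    refine mem_inter.mpr ⟨?_, ?_⟩
    · exact by_contra fun hzI => hzx (hdeg z hzK x hx hzI hyJ)
    · exact by_contra fun hzJ => hzx (hdeg x hx z hzK hxI hzJ).symm
  have hle := card_le_card hsub
  rw [card_erase_of_mem hx] at hle
  lia

lemma exists_insert_mem (h : IsTriad r 𝒜 ℬ 𝒞) {S : Finset ι} {i j : ι} (hS : #S = r + 1)
    (hi : insert i S ∈ 𝒜) (hj : insert j S ∈ ℬ) : ∃ k ∉ S, insert k S ∈ 𝒞 := by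
  have isDegenerate_insert (i) : IsDegenerate S S (insert i S) := fun x hx y hy hxS hyS =>
    ((mem_insert.mp hx).resolve_right hxS).trans ((mem_insert.mp hy).resolve_right hyS).symm
  obtain ⟨K, hK, hdeg⟩ :=
    h.exists_right S S ⟨_, hi, isDegenerate_insert i⟩ ⟨_, hj, isDegenerate_insert j⟩
  have hKcard := h.card_right K hK
  obtain ⟨k, hkK, hkS⟩ : ∃ k ∈ K, k ∉ S :=
    not_subset.mp fun hsub => by have := card_le_card hsub; lia
  have hsub : K ⊆ insert k S := fun z hz =>
    mem_insert.mpr (or_iff_not_imp_right.mpr fun hzS => hdeg z hz k hkK hzS hkS)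
  have heq := eq_of_subset_of_card_le hsub (by rw [card_insert_of_notMem hkS]; lia)
  exact ⟨k, hkS, heq ▸ hK⟩

lemma exists_insert_mem_insert_mem (h : IsTriad r 𝒜 ℬ 𝒞) (hA : 𝒜.Nonempty) (hB : ℬ.Nonempty) :
    ∃ (S : Finset ι) (k l : ι), #S = r + 1 ∧ k ∉ S ∧ l ∉ S ∧ insert k S ∈ 𝒜 ∧ insert l S ∈ ℬ := by
  obtain ⟨I, hI⟩ := hA
  obtain ⟨J, hJ⟩ := hB
  have hS := h.card_inter hI hJ
  obtain ⟨k, hk, hkI⟩ := exists_eq_insert_iff.mpr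
    ⟨inter_subset_left (s₁ := I) (s₂ := J), by rw [hS, h.card_left I hI]⟩
  obtain ⟨l, hl, hlJ⟩ := exists_eq_insert_iff.mpr
    ⟨inter_subset_right (s₁ := I) (s₂ := J), by rw [hS, h.card_mid J hJ]⟩
  exact ⟨I ∩ J, k, l, hS, hk, hl, hkI.symm ▸ hI, hlJ.symm ▸ hJ⟩

lemma exists_insert_insert_erase_mem (h : IsTriad r 𝒜 ℬ 𝒞) {S : Finset ι} {k l : ι} (hk : k ∉ S)
    (hl : l ∉ S) (hkS : insert k S ∈ 𝒜) (hlS : insert l S ∈ ℬ) :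
    ∃ j ∈ S, insert k (insert l (S.erase j)) ∈ 𝒞 := by
  have hkl : k ≠ l := fun heq => Set.disjoint_left.mp h.disjoint_left_mid hkS (heq ▸ hlS)
  have hS := h.card_left _ hkS
  rw [card_insert_of_notMem hk] at hS
  obtain ⟨K, hK, hsub⟩ := h.exists_subset_mem (T := insert k (insert l S)) hkS hlS
    (insert_subset_insert k (subset_insert l S)) (subset_insert k _)
  obtain ⟨j, hjK, hKeq⟩ := exists_eq_insert_iff.mpr ⟨hsub, by
    rw [h.card_right K hK, card_insert_of_notMem (by simp [hkl, hk]), card_insert_of_notMem hl]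
    lia⟩
  obtain rfl : K = (insert k (insert l S)).erase j := by rw [← hKeq, erase_insert hjK]
  have hjk : j ≠ k := fun hjk => Set.disjoint_left.mp h.disjoint_mid_right hlS
    (by simpa [hjk, hkl, hk] using hK)
  have hjl : j ≠ l := fun hjl => Set.disjoint_left.mp h.disjoint_right_left hK
    (by simpa [hjl, erase_insert_of_ne hkl, hl] using hkS)
  have hj : j ∈ insert k (insert l S) := hKeq ▸ mem_insert_self j _
  rw [erase_insert_of_ne hjk.symm, erase_insert_of_ne hjl.symm] at hK
  exact ⟨j, by simpa [hjk, hjl] using hj, hK⟩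

lemma opposite_mem (h : IsTriad r 𝒜 ℬ 𝒞) {R : Finset ι} {j k l s : ι} (hR : #R = r)
    (hnodup : [j, k, l, s].Nodup) (hout : ∀ x ∈ [j, k, l, s], x ∉ R)
    (hjl : insert j (insert l R) ∈ ℬ) (hkl : insert k (insert l R) ∈ 𝒞)
    (hjs : insert j (insert s R) ∈ 𝒞) : insert l (insert s R) ∈ 𝒜 := by
  simp only [List.nodup_cons, List.mem_cons, List.not_mem_nil, or_false, not_or] at hnodup
  simp only [List.forall_mem_cons] at hout
  obtain ⟨⟨-, hjl', hjs'⟩, -, hls', -⟩ := hnodup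
  obtain ⟨hj, -, hl, hs, -⟩ := hout
  obtain ⟨y, hyl, hy⟩ := h.rotate.exists_insert_mem (by rw [card_insert_of_notMem hl, hR]) hjl hkl
  have hyj : j ≠ y := fun heq => Set.disjoint_left.mp h.disjoint_left_mid hy (heq ▸ hjl)
  have hinter := h.rotate.rotate.card_inter hjs hy
  rw [inter_comm, card_inter_insert_insert hj hs hjs',
    inter_eq_right.mpr ((subset_insert l R).trans (subset_insert y _)), hR,
    if_neg (by simp [hyj, hjl', hj])] at hinter
  have hsy : s ∈ insert y (insert l R) := by by_contra hsy; simp [hsy] at hinter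
  obtain rfl : s = y := by simpa [Ne.symm hls', hs] using hsy
  rwa [insert_comm]

lemma left_eq_pair (h : IsTriad r 𝒜 ℬ 𝒞) {R : Finset ι} {j k l s : ι} (hR : #R = r)
    (hnodup : [j, k, l, s].Nodup) (hout : ∀ x ∈ [j, k, l, s], x ∉ R)
    (hjk : insert j (insert k R) ∈ 𝒜) (hls : insert l (insert s R) ∈ 𝒜)
    (hjl : insert j (insert l R) ∈ ℬ) (hsk : insert s (insert k R) ∈ ℬ)
    (hjs : insert j (insert s R) ∈ 𝒞) (hkl : insert k (insert l R) ∈ 𝒞) :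
    𝒜 = {insert j (insert k R), insert l (insert s R)} := by
  refine Set.Subset.antisymm (fun X hX => ?_) (Set.pair_subset hjk hls)
  have card_inter_right {K} (hK : K ∈ 𝒞) : #(X ∩ K) = r + 1 :=
    inter_comm K X ▸ h.rotate.rotate.card_inter hK hX
  exact eq_or_eq_of_card_inter hR (h.card_left X hX) hnodup hout (h.card_inter hX hjl)
    (card_inter_right hjs) (card_inter_right hkl) (insert_comm s k R ▸ h.card_inter hX hsk)

lemma exists_edges_mem (h : IsTriad r 𝒜 ℬ 𝒞) (hA : 𝒜.Nonempty) (hB : ℬ.Nonempty) :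
    ∃ (R : Finset ι) (j k l s : ι), #R = r ∧ [j, k, l, s].Nodup ∧ (∀ x ∈ [j, k, l, s], x ∉ R) ∧
      insert j (insert k R) ∈ 𝒜 ∧ insert j (insert l R) ∈ ℬ ∧
      insert j (insert s R) ∈ 𝒞 ∧ insert k (insert l R) ∈ 𝒞 := by
  obtain ⟨S, k, l, hS, hk, hl, hkS, hlS⟩ := h.exists_insert_mem_insert_mem hA hB
  obtain ⟨s, hs, hsS⟩ := h.exists_insert_mem hS hkS hlS
  obtain ⟨j, hj, hkl⟩ := h.exists_insert_insert_erase_mem hk hl hkS hlS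
  obtain ⟨R, hjR, rfl⟩ : ∃ R, j ∉ R ∧ insert j R = S :=
    ⟨S.erase j, notMem_erase j S, insert_erase hj⟩
  have hkl' : k ≠ l := fun heq => Set.disjoint_left.mp h.disjoint_left_mid hkS (heq ▸ hlS)
  have hls' : l ≠ s := fun heq => Set.disjoint_left.mp h.disjoint_mid_right hlS (heq ▸ hsS)
  have hsk' : s ≠ k := fun heq => Set.disjoint_left.mp h.disjoint_right_left hsS (heq ▸ hkS)
  rw [insert_comm] at hkS hlS hsS
  rw [erase_insert hjR] at hkl
  exact ⟨R, j, k, l, s, by simpa [hjR] using hS, by grind, by grind, hkS, hlS, hsS, hkl⟩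

theorem exists_eq_pairs (h : IsTriad r 𝒜 ℬ 𝒞) (hA : 𝒜.Nonempty) (hB : ℬ.Nonempty) :
    ∃ (R : Finset ι) (j k l s : ι), #R = r ∧ [j, k, l, s].Nodup ∧ (∀ x ∈ [j, k, l, s], x ∉ R) ∧
      𝒜 = {insert j (insert k R), insert l (insert s R)} ∧
      ℬ = {insert j (insert l R), insert s (insert k R)} ∧
      𝒞 = {insert j (insert s R), insert k (insert l R)} := by
  obtain ⟨R, j, k, l, s, hR, hnodup, hout, hjk, hjl, hjs, hkl⟩ := h.exists_edges_mem hA hB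
  have hls : insert l (insert s R) ∈ 𝒜 := h.opposite_mem hR hnodup hout hjl hkl hjs
  have hsk : insert s (insert k R) ∈ ℬ := insert_comm k s R ▸ h.swap.opposite_mem (k := l) hR
    (by grind) (by grind) hjk (insert_comm k l R ▸ hkl) hjs
  refine ⟨R, j, k, l, s, hR, hnodup, hout, ?_, ?_, ?_⟩
  · exact h.left_eq_pair hR hnodup hout hjk hls hjl hsk hjs hkl
  · exact h.rotate.left_eq_pair hR (by grind) (by grind) hjl hsk hjs hkl hjk hls
  · exact h.rotate.rotate.left_eq_pair hR (by grind) (by grind) hjs hkl hjk hls hjl hsk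

end IsTriad

end Triad

section PluckerPower

variable {k : Type*} [Field k]

/-- The Plücker relation of four vectors of the plane, with arbitrary coefficients and with
arbitrary exponents on the six wedge products. This is what `A + B + C = 0` becomes once `A`, `B`
and `C` are factored; the genuine relation has equal coefficients and all exponents `1`. -/
def PluckerPowerRelation (α β γ : k) (a b c : ℕ × ℕ) : Prop :=
  ∀ u v w z : Fin 2 → k, α * planeWedge u v ^ a.1 * planeWedge w z ^ a.2 +
    β * planeWedge u w ^ b.1 * planeWedge z v ^ b.2 +
    γ * planeWedge u z ^ c.1 * planeWedge v w ^ c.2 = 0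

variable {α β γ : k} {a b c : ℕ × ℕ}

lemma PluckerPowerRelation.rotate (h : PluckerPowerRelation α β γ a b c) :
    PluckerPowerRelation β γ α b c a :=
  fun u v w z => by linear_combination h u z v w

variable [CharZero k]

lemma eq_of_two_pow_eq {e f : ℕ} (h : (2 : k) ^ e = 2 ^ f) : e = f :=
  Nat.pow_right_injective le_rfl (by exact_mod_cast h)

lemma eq_of_forall_mul_pow_mul_pow_eq {e₁ e₂ f₁ f₂ : ℕ} (hβ : β ≠ 0)
    (h : ∀ x y : k, β * x ^ e₁ * y ^ e₂ = γ * x ^ f₁ * y ^ f₂) : e₁ = f₁ ∧ e₂ = f₂ ∧ β = γ := by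
  obtain rfl : β = γ := by simpa using h 1 1
  refine ⟨eq_of_two_pow_eq (k := k) ?_, eq_of_two_pow_eq (k := k) ?_, rfl⟩
  · simpa [hβ] using h 2 1
  · simpa [hβ] using h 1 2

namespace PluckerPowerRelation

lemma mid_eq_swap_right (h : PluckerPowerRelation α β γ a b c) (ha : a.1 ≠ 0) (hβ : β ≠ 0) :
    b = c.swap ∧ β * (-1) ^ b.2 = -γ := by
  have hmonomial (x y : k) : β * (-1) ^ b.2 * x ^ b.1 * y ^ b.2 = -γ * x ^ c.2 * y ^ c.1 := by
    have hxy := h ![1, 0] ![1, 0] ![0, x] ![0, y]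
    simp only [planeWedge, Matrix.cons_val_zero, Matrix.cons_val_one, mul_zero, zero_mul, one_mul,
      sub_zero, zero_sub, zero_pow ha, zero_add, mul_one] at hxy
    rw [neg_pow y] at hxy
    linear_combination hxy
  obtain ⟨h₁, h₂, hγ⟩ := eq_of_forall_mul_pow_mul_pow_eq
    (mul_ne_zero hβ (pow_ne_zero _ (neg_ne_zero.mpr one_ne_zero))) hmonomial
  exact ⟨Prod.ext h₁ h₂, hγ⟩

theorem eq_one (h : PluckerPowerRelation α β γ a b c) (hα : α ≠ 0) (hβ : β ≠ 0) (hγ : γ ≠ 0)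
    (ha : a.1 ≠ 0) (hb : b.1 ≠ 0) (hc : c.1 ≠ 0) :
    a = 1 ∧ b = 1 ∧ c = 1 ∧ β = α ∧ γ = α := by
  obtain ⟨rfl, hβγ⟩ := h.mid_eq_swap_right ha hβ
  obtain ⟨rfl, hγα⟩ := h.rotate.mid_eq_swap_right hb hγ
  obtain ⟨hswap, hαβ⟩ := h.rotate.rotate.mid_eq_swap_right hc hα
  obtain ⟨N, N'⟩ := a
  obtain rfl : N = N' := congrArg Prod.fst hswap
  simp only [Prod.swap_prod_mk] at h hαβ hβγ hγα
  have hodd : (-1 : k) ^ N = -1 := by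
    refine (neg_one_pow_eq_or k N).resolve_left fun hone => hα ?_
    rw [hone, mul_one] at hαβ hβγ hγα
    linear_combination (hαβ - hβγ + hγα) / 2
  rw [hodd, mul_neg_one, neg_inj] at hαβ hγα
  subst hαβ hγα
  have hpow : (2 : k) ^ N = 2 ^ 1 := by
    have h2 := h ![1, 0] ![1, 2] ![0, 1] ![1, 1]
    norm_num [planeWedge, hodd] at h2
    exact mul_left_cancel₀ hγ (by linear_combination -h2)
  obtain rfl := eq_of_two_pow_eq hpow
  exact ⟨rfl, rfl, rfl, rfl, rfl⟩

end PluckerPowerRelation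

end PluckerPower

section Snoc

variable {α : Type*} {r : ℕ} {i : Fin r → α} {j k l s : α}

lemma exists_injective_image_univ_eq [LinearOrder α] {R : Finset α} (hR : R.card = r) :
    ∃ i : Fin r → α, Function.Injective i ∧ Finset.univ.image i = R :=
  ⟨R.orderEmbOfFin hR, (R.orderEmbOfFin hR).injective, R.image_orderEmbOfFin_univ hR⟩

variable [DecidableEq α]

lemma image_univ_snoc_snoc (i : Fin r → α) (j k : α) :
    Finset.univ.image (Fin.snoc (Fin.snoc i j) k : Fin (r + 2) → α) =
      insert j (insert k (Finset.univ.image i)) := by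
  rw [Finset.insert_comm, ← Finset.coe_inj]
  simp [Fin.range_snoc]

lemma injective_snoc_snoc (hi : Function.Injective i) (hj : j ∉ Finset.univ.image i)
    (hk : k ∉ Finset.univ.image i) (hjk : j ≠ k) :
    Function.Injective (Fin.snoc (Fin.snoc i j) k : Fin (r + 2) → α) := by
  simp_all [Fin.snoc_injective_iff, Fin.range_snoc, eq_comm]

lemma injective_snoc_snoc_snoc_snoc (hi : Function.Injective i) (hnodup : [j, k, l, s].Nodup)
    (hout : ∀ x ∈ [j, k, l, s], x ∉ Finset.univ.image i) :
    Function.Injective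
      (Fin.snoc (Fin.snoc (Fin.snoc (Fin.snoc i j) k) l) s : Fin (r + 4) → α) := by
  simp_all [Fin.snoc_injective_iff, Fin.range_snoc, eq_comm]

end Snoc

section PlaneProjection

variable {n m : ℕ} {i : Fin (m + 1) → Fin n}

-- Put the points `i r` at the vertices of a simplex lying over the origin of the plane of the
-- first two coordinates, and the remaining points in that plane.
lemma exists_eval_dpoly_snoc_snoc (hi : Function.Injective i) (u : Fin n → Fin 2 → ℂ) :
    ∃ p : Fin n × Fin (m + 2) → ℂ, ∀ x ∉ Finset.univ.image i, ∀ y ∉ Finset.univ.image i,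
      eval p (dpoly (Fin.snoc (Fin.snoc i x) y)) = planeWedge (u x) (u y) := by
  let simplex (r : Fin (m + 1)) : Fin (m + 2) → ℂ :=
    Fin.cons 0 (Fin.cons 0 fun j => if r = j.castSucc then 1 else 0)
  let lift (x : Fin n) : Fin (m + 2) → ℂ := Fin.cons (u x 0) (Fin.cons (u x 1) 0)
  let q : Fin n → Fin (m + 2) → ℂ := Function.extend i simplex lift
  have hq {x : Fin n} (hx : x ∉ Finset.univ.image i) : q x = lift x :=
    Function.extend_apply' _ _ _ (by simpa using hx)
  refine ⟨fun v => q v.1 v.2, fun x hx y hy => ?_⟩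
  have hcomp : q ∘ (Fin.snoc (Fin.snoc i x) y : Fin (m + 3) → Fin n) =
      Fin.snoc (Fin.snoc simplex (lift x)) (lift y) := by
    rw [Fin.comp_snoc, Fin.comp_snoc, Function.extend_comp hi simplex lift, hq hx, hq hy]
  have hsimplex : affineDet (fun r (j : Fin m) => simplex r j.succ.succ) = 1 := affineDet_simplex
  rw [eval_dpoly, hcomp, affineDet_snoc_snoc (fun _ => rfl) (fun _ => rfl), hsimplex, one_mul]
  rfl

end PlaneProjection

section Factorization

variable {n m : ℕ} {i : Fin (m + 1) → Fin n}

lemma NonvanishingOnGenPos.exists_eq_C_mul_dpoly_snoc_pow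
    {P : MvPolynomial (Fin n × Fin (m + 2)) ℂ} (h : NonvanishingOnGenPos P)
    (hi : Function.Injective i) {x y z w : Fin n} (hnodup : [x, y, z, w].Nodup)
    (hout : ∀ v ∈ [x, y, z, w], v ∉ Finset.univ.image i)
    (hP : simplexDivisors P =
      {insert x (insert y (Finset.univ.image i)), insert z (insert w (Finset.univ.image i))}) :
    ∃ (c : ℂ) (e : ℕ × ℕ), c ≠ 0 ∧ e.1 ≠ 0 ∧ P = C c * dpoly (Fin.snoc (Fin.snoc i x) y) ^ e.1 *
      dpoly (Fin.snoc (Fin.snoc i z) w) ^ e.2 := by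
  simp only [← image_univ_snoc_snoc] at hP
  have hne : Finset.univ.image (Fin.snoc (Fin.snoc i x) y : Fin (m + 3) → Fin n) ≠
      Finset.univ.image (Fin.snoc (Fin.snoc i z) w : Fin (m + 3) → Fin n) := by
    rw [image_univ_snoc_snoc, image_univ_snoc_snoc]
    intro heq
    have hx := heq ▸ Finset.mem_insert_self x (insert y (Finset.univ.image i))
    grind
  obtain ⟨c, e, f, hc, he, hPc⟩ := h.exists_eq_C_mul_pow_mul_pow
    (injective_snoc_snoc hi (by grind) (by grind) (by grind))
    (injective_snoc_snoc hi (by grind) (by grind) (by grind)) hne hP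
  exact ⟨c, (e, f), hc, he, hPc⟩

lemma pluckerPowerRelation_of_add_add_eq_zero (hi : Function.Injective i) {j k l s : Fin n}
    (hnodup : [j, k, l, s].Nodup) (hout : ∀ x ∈ [j, k, l, s], x ∉ Finset.univ.image i)
    {α β γ : ℂ} {a b c : ℕ × ℕ}
    (h : C α * dpoly (Fin.snoc (Fin.snoc i j) k) ^ a.1 * dpoly (Fin.snoc (Fin.snoc i l) s) ^ a.2 +
      C β * dpoly (Fin.snoc (Fin.snoc i j) l) ^ b.1 * dpoly (Fin.snoc (Fin.snoc i s) k) ^ b.2 +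
      C γ * dpoly (Fin.snoc (Fin.snoc i j) s) ^ c.1 * dpoly (Fin.snoc (Fin.snoc i k) l) ^ c.2 =
        0) :
    PluckerPowerRelation α β γ a b c := by
  intro u v w z
  simp only [List.nodup_cons, List.mem_cons, List.not_mem_nil, or_false, not_or] at hnodup
  simp only [List.forall_mem_cons] at hout
  obtain ⟨⟨hjk, hjl, hjs⟩, ⟨hkl, hks⟩, hls, -⟩ := hnodup
  obtain ⟨hj, hk, hl, hs, -⟩ := hout
  obtain ⟨p, hp⟩ := exists_eval_dpoly_snoc_snoc hi
    fun x => if j = x then u else if k = x then v else if l = x then w else z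
  have heval := congrArg (eval p) h
  simpa only [map_add, map_mul, map_pow, eval_C, map_zero, hp, hj, hk, hl, hs, hjk, hjl, hjs, hkl,
    hks, hls, not_false_eq_true, if_true, if_false] using heval

end Factorization

section ABC

variable {n m : ℕ}

lemma NonvanishingOnGenPos.eval_eq_zero_iff_exists_isDegenerate
    {P : MvPolynomial (Fin n × Fin (m + 2)) ℂ} (h : NonvanishingOnGenPos P)
    {I J : Finset (Fin n)} {q : Fin n → Fin (m + 2) → ℂ}
    (hq : ∀ a : Fin (m + 3) → Fin n, Function.Injective a →
      (affineDet (q ∘ a) = 0 ↔ IsDegenerate I J (Finset.univ.image a))) :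
    eval (fun v => q v.1 v.2) P = 0 ↔ ∃ K ∈ simplexDivisors P, IsDegenerate I J K := by
  rw [h.eval_eq_zero_iff]
  constructor
  · rintro ⟨a, ha, hdvd, h0⟩
    rw [eval_dpoly, hq a ha] at h0
    exact ⟨_, ⟨a, ha, rfl, hdvd⟩, h0⟩
  · rintro ⟨_, ⟨a, ha, rfl, hdvd⟩, hdeg⟩
    exact ⟨a, ha, hdvd, by rwa [eval_dpoly, hq a ha]⟩

/-- The hypotheses of the ABC lemma, in a form invariant under cyclic permutations of `A`, `B` and
`C`. -/
structure IsABCTriple (A B C : MvPolynomial (Fin n × Fin m) ℂ) : Prop where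
  nonvanishing_left : NonvanishingOnGenPos A
  nonvanishing_mid : NonvanishingOnGenPos B
  nonvanishing_right : NonvanishingOnGenPos C
  isRelPrime_left_mid : IsRelPrime A B
  isRelPrime_mid_right : IsRelPrime B C
  isRelPrime_right_left : IsRelPrime C A
  nonconstant : A.totalDegree ≠ 0 ∨ B.totalDegree ≠ 0 ∨ C.totalDegree ≠ 0
  add_add_eq_zero : A + B + C = 0

namespace IsABCTriple

lemma rotate {A B C : MvPolynomial (Fin n × Fin m) ℂ} (h : IsABCTriple A B C) :
    IsABCTriple B C A where
  nonvanishing_left := h.nonvanishing_mid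
  nonvanishing_mid := h.nonvanishing_right
  nonvanishing_right := h.nonvanishing_left
  isRelPrime_left_mid := h.isRelPrime_mid_right
  isRelPrime_mid_right := h.isRelPrime_right_left
  isRelPrime_right_left := h.isRelPrime_left_mid
  nonconstant := by have := h.nonconstant; tauto
  add_add_eq_zero := by linear_combination h.add_add_eq_zero

lemma totalDegree_ne_zero_left_or_mid {A B C : MvPolynomial (Fin n × Fin m) ℂ}
    (h : IsABCTriple A B C) : A.totalDegree ≠ 0 ∨ B.totalDegree ≠ 0 := by
  by_contra! hAB
  have hC : C.totalDegree = 0 := by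
    rw [← neg_eq_of_add_eq_zero_right h.add_add_eq_zero, totalDegree_neg]
    exact Nat.le_zero.mp ((totalDegree_add A B).trans (by simp [hAB]))
  simpa [hAB, hC] using h.nonconstant

variable {A B C : MvPolynomial (Fin n × Fin (m + 2)) ℂ}

lemma exists_isDegenerate_right (h : IsABCTriple A B C) (I J : Finset (Fin n))
    (hA : ∃ K ∈ simplexDivisors A, IsDegenerate I J K)
    (hB : ∃ K ∈ simplexDivisors B, IsDegenerate I J K) :
    ∃ K ∈ simplexDivisors C, IsDegenerate I J K := by
  obtain ⟨q, hq⟩ := exists_affineDet_eq_zero_iff_isDegenerate ℂ m I J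
  rw [← h.nonvanishing_left.eval_eq_zero_iff_exists_isDegenerate hq] at hA
  rw [← h.nonvanishing_mid.eval_eq_zero_iff_exists_isDegenerate hq] at hB
  rw [← h.nonvanishing_right.eval_eq_zero_iff_exists_isDegenerate hq]
  simpa [hA, hB] using congrArg (eval fun v => q v.1 v.2) h.add_add_eq_zero

lemma isTriad (h : IsABCTriple A B C) :
    IsTriad (m + 1) (simplexDivisors A) (simplexDivisors B) (simplexDivisors C) where
  card_left _ := card_eq_of_mem_simplexDivisors
  card_mid _ := card_eq_of_mem_simplexDivisors
  card_right _ := card_eq_of_mem_simplexDivisors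
  disjoint_left_mid := disjoint_simplexDivisors h.isRelPrime_left_mid
  disjoint_mid_right := disjoint_simplexDivisors h.isRelPrime_mid_right
  disjoint_right_left := disjoint_simplexDivisors h.isRelPrime_right_left
  exists_left := h.rotate.exists_isDegenerate_right
  exists_mid := h.rotate.rotate.exists_isDegenerate_right
  exists_right := h.exists_isDegenerate_right

lemma simplexDivisors_nonempty (h : IsABCTriple A B C) : (simplexDivisors A).Nonempty := by
  by_cases hA : A.totalDegree = 0
  · have hB := h.totalDegree_ne_zero_left_or_mid.resolve_left (not_not.mpr hA)
    have hC := h.rotate.rotate.totalDegree_ne_zero_left_or_mid.resolve_right (not_not.mpr hA)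
    obtain ⟨J, hJ⟩ := h.nonvanishing_mid.simplexDivisors_nonempty hB
    obtain ⟨K, hK⟩ := h.nonvanishing_right.simplexDivisors_nonempty hC
    obtain ⟨I, hI, -⟩ := h.isTriad.rotate.exists_subset_mem hJ hK
      Finset.subset_union_left Finset.subset_union_right
    exact ⟨I, hI⟩
  · exact h.nonvanishing_left.simplexDivisors_nonempty hA

end IsABCTriple

end ABC

/-- The ABC lemma (the paper's `m` is `M + 2 ≥ 2`, and `n ≥ m + 3`):
if `A, B, C` are pairwise coprime polynomials nonvanishing on `ℰⁿ(ℂ^m, gp)`,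
at least one of them nonconstant, with `A + B + C = 0`, then for some distinct
indices `i_1,...,i_{m-1},j,k,l,s` and some `α ≠ 0`:
`A = α·d_{𝐢,j,k}·d_{𝐢,l,s}`, `B = α·d_{𝐢,j,l}·d_{𝐢,s,k}`, `C = α·d_{𝐢,j,s}·d_{𝐢,k,l}`. -/
theorem abc_lemma {n M : ℕ} (hn : M + 5 ≤ n)
    (A B C : MvPolynomial (Fin n × Fin (M + 2)) ℂ)
    (hAB : ∀ p, p ∣ A → p ∣ B → IsUnit p)
    (hAC : ∀ p, p ∣ A → p ∣ C → IsUnit p)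
    (hBC : ∀ p, p ∣ B → p ∣ C → IsUnit p)
    (hA : ∀ q : Fin n → Fin (M + 2) → ℂ, GenPos q →
      MvPolynomial.eval (fun v => q v.1 v.2) A ≠ 0)
    (hB : ∀ q : Fin n → Fin (M + 2) → ℂ, GenPos q →
      MvPolynomial.eval (fun v => q v.1 v.2) B ≠ 0)
    (hC : ∀ q : Fin n → Fin (M + 2) → ℂ, GenPos q →
      MvPolynomial.eval (fun v => q v.1 v.2) C ≠ 0)
    (hnc : A.totalDegree ≠ 0 ∨ B.totalDegree ≠ 0 ∨ C.totalDegree ≠ 0)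
    (hsum : A + B + C = 0) :
    ∃ (i : Fin (M + 1) → Fin n) (j k l s : Fin n) (α : ℂ), α ≠ 0 ∧
      Function.Injective
        (Fin.snoc (Fin.snoc (Fin.snoc (Fin.snoc i j) k) l) s : Fin (M + 5) → Fin n) ∧
      A = MvPolynomial.C α * dpoly (Fin.snoc (Fin.snoc i j) k) * dpoly (Fin.snoc (Fin.snoc i l) s) ∧
      B = MvPolynomial.C α * dpoly (Fin.snoc (Fin.snoc i j) l) * dpoly (Fin.snoc (Fin.snoc i s) k) ∧
      C = MvPolynomial.C α * dpoly (Fin.snoc (Fin.snoc i j) s) * dpoly (Fin.snoc (Fin.snoc i k) l) := by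
  have h : IsABCTriple A B C :=
    ⟨hA, hB, hC, @hAB, @hBC, fun p hpC hpA => hAC p hpA hpC, hnc, hsum⟩
  obtain ⟨R, j, k, l, s, hR, hnodup, hout, hA', hB', hC'⟩ :=
    h.isTriad.exists_eq_pairs h.simplexDivisors_nonempty h.rotate.simplexDivisors_nonempty
  obtain ⟨i, hi, rfl⟩ := exists_injective_image_univ_eq hR
  obtain ⟨α, a, hα, ha, hAα⟩ := h.nonvanishing_left.exists_eq_C_mul_dpoly_snoc_pow
    hi hnodup hout hA'
  obtain ⟨β, b, hβ, hb, hBβ⟩ := h.nonvanishing_mid.exists_eq_C_mul_dpoly_snoc_pow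
    hi (by grind) (by grind) hB'
  obtain ⟨γ, c, hγ, hc, hCγ⟩ := h.nonvanishing_right.exists_eq_C_mul_dpoly_snoc_pow
    hi (by grind) (by grind) hC'
  obtain ⟨rfl, rfl, rfl, rfl, rfl⟩ :=
    (pluckerPowerRelation_of_add_add_eq_zero hi hnodup hout (hAα ▸ hBβ ▸ hCγ ▸ hsum)).eq_one
      hα hβ hγ ha hb hc
  exact ⟨i, j, k, l, s, _, hα, injective_snoc_snoc_snoc_snoc hi hnodup hout,
    by simpa using hAα, by simpa using hBβ, by simpa using hCγ⟩
end

section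
/- Two determinant cross ratios e_{𝐢;j,k,l,s} and e_{𝐢';j',k',l',s'} coincide as functions on ℰⁿ(ℂ^m,gp) if and only if the underlying sets {𝐢} = {𝐢'} and (j',k',l',s') is obtained from (j,k,l,s) by a Kleinian permutation (i.e., the identity, (j k)(l s), (j l)(k s), or (j s)(k l)). -/
/-- The determinant cross ratio `e_{𝐢;j,k,l,s}` (here the paper's `m` is `M + 1`,
so `𝐢` has `m - 1 = M` entries and points lie in `ℂ^{M+1}`). -/
noncomputable def ecr {n M : ℕ} (q : Fin n → Fin (M + 1) → ℂ) (i : Fin M → Fin n)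
    (j k l s : Fin n) : ℂ :=
  (dA q (Fin.snoc (Fin.snoc i j) k) * dA q (Fin.snoc (Fin.snoc i l) s)) /
  (dA q (Fin.snoc (Fin.snoc i j) l) * dA q (Fin.snoc (Fin.snoc i k) s))

/-!
Clearing denominators, an equality of cross ratios on configurations in general position becomes an
identity between products of four determinants, which extends to all configurations by density.

The index sets occurring on each side can be read off from the zeros of that side. Indeed, on the
curve `z ↦ (z, …, z^M, z^{M+2})` the determinant of the points with parameters `x_b`, `b ∈ S`, is a
Vandermonde determinant times `∑_{b ∈ S} x_b`. Taking for `x_b` the number `2 ^ b` minus the mean of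
these numbers over `S`, exactly the determinants with index set `S` vanish, because subset sums of
powers of two are distinct.

Numerator and denominator of one cross ratio share no index set, so both cross ratios have the same
pair of index sets `{𝐢, j, k}, {𝐢, l, s}` in the numerator and the same pair `{𝐢, j, l}, {𝐢, k, s}`
in the denominator. The intersection of either pair is `{𝐢}`, and the two resulting pairings of
`{j, k, l, s}` determine `(j, k, l, s)` up to the Klein four-group.
-/

section Permutations

variable {n M : ℕ}

/-- `t` arises from the quadruple `(j, k, l, s)` by an element of the Klein four-group acting on
positions. -/
def KleinianRelated {α : Type*} : α × α × α × α → α × α × α × α → Prop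
  | (j, k, l, s), t => t = (j, k, l, s) ∨ t = (k, j, s, l) ∨ t = (l, s, j, k) ∨ t = (s, l, k, j)

theorem exists_perm_eq_comp_of_range_eq {ι α : Type*} {f g : ι → α} (hf : f.Injective)
    (hg : g.Injective) (h : Set.range f = Set.range g) : ∃ σ : Equiv.Perm ι, g = f ∘ σ :=
  ⟨(Equiv.ofInjective g hg).trans
      ((Equiv.setCongr h.symm).trans (Equiv.ofInjective f hf).symm), by
    ext r; simp [Equiv.apply_ofInjective_symm hf]⟩

theorem exists_perm_snoc_comp {N : ℕ} {α : Type*} (f : Fin N → α) (σ : Equiv.Perm (Fin N)) :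
    ∃ τ : Equiv.Perm (Fin (N + 1)), Equiv.Perm.sign τ = Equiv.Perm.sign σ ∧
      ∀ x, (Fin.snoc (f ∘ σ) x : Fin (N + 1) → α) = (Fin.snoc f x : Fin (N + 1) → α) ∘ τ := by
  refine ⟨finSuccEquivLast.symm.permCongr σ.optionCongr, by simp, fun x => ?_⟩
  ext r
  cases r using Fin.lastCases <;> simp [Equiv.permCongr_apply]

theorem snoc_snoc_swap {N : ℕ} {α : Type*} (f : Fin N → α) (x y : α) :
    (Fin.snoc (Fin.snoc f y : Fin (N + 1) → α) x : Fin (N + 2) → α) =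
      (Fin.snoc (Fin.snoc f x : Fin (N + 1) → α) y : Fin (N + 2) → α) ∘
        Equiv.swap (Fin.last N).castSucc (Fin.last (N + 1)) := by
  ext r
  cases r using Fin.lastCases with
  | last => simp
  | cast r =>
    cases r using Fin.lastCases with
    | last => simp
    | cast r =>
      simp [Equiv.swap_apply_of_ne_of_ne, Fin.castSucc_ne_last]

theorem dA_comp_perm {m : ℕ} (q : Fin n → Fin m → ℂ) (a : Fin (m + 1) → Fin n)
    (σ : Equiv.Perm (Fin (m + 1))) : dA q (a ∘ σ) = (Equiv.Perm.sign σ : ℤ) * dA q a := by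
  rw [dA, dA, ← Matrix.det_permute]
  rfl

theorem dA_snoc_snoc_swap (q : Fin n → Fin (M + 1) → ℂ) (i : Fin M → Fin n) (j k : Fin n) :
    dA q (Fin.snoc (Fin.snoc i k) j) = -dA q (Fin.snoc (Fin.snoc i j) k) := by
  simp [snoc_snoc_swap i j k, dA_comp_perm, Fin.castSucc_ne_last]

theorem dA_snoc_snoc_comp_perm (q : Fin n → Fin (M + 1) → ℂ) (i : Fin M → Fin n)
    (σ : Equiv.Perm (Fin M)) (j k : Fin n) :
    dA q (Fin.snoc (Fin.snoc (i ∘ σ) j) k) =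
      (Equiv.Perm.sign σ : ℤ) * dA q (Fin.snoc (Fin.snoc i j) k) := by
  obtain ⟨τ, hτσ, hτ⟩ := exists_perm_snoc_comp i σ
  obtain ⟨ρ, hρτ, hρ⟩ := exists_perm_snoc_comp (Fin.snoc i j) τ
  rw [hτ, hρ, dA_comp_perm, hρτ, hτσ]

theorem ecr_comp_perm (q : Fin n → Fin (M + 1) → ℂ) (i : Fin M → Fin n)
    (σ : Equiv.Perm (Fin M)) (j k l s : Fin n) :
    ecr q (i ∘ σ) j k l s = ecr q i j k l s := by
  simp only [ecr, dA_snoc_snoc_comp_perm]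
  rcases Int.units_eq_one_or (Equiv.Perm.sign σ) with hσ | hσ <;> simp [hσ]

theorem ecr_swap_jk_ls (q : Fin n → Fin (M + 1) → ℂ) (i : Fin M → Fin n) (j k l s : Fin n) :
    ecr q i k j s l = ecr q i j k l s := by
  simp only [ecr, dA_snoc_snoc_swap q i j k, dA_snoc_snoc_swap q i l s]
  ring

theorem ecr_swap_jl_ks (q : Fin n → Fin (M + 1) → ℂ) (i : Fin M → Fin n) (j k l s : Fin n) :
    ecr q i l s j k = ecr q i j k l s := by
  simp only [ecr, dA_snoc_snoc_swap q i j l, dA_snoc_snoc_swap q i k s]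
  ring

theorem ecr_eq_of_kleinian {i i' : Fin M → Fin n} {j k l s j' k' l' s' : Fin n}
    (hi : i.Injective) (hi' : i'.Injective) (hrange : Set.range i = Set.range i')
    (hklein : KleinianRelated (j, k, l, s) (j', k', l', s'))
    (q : Fin n → Fin (M + 1) → ℂ) : ecr q i j k l s = ecr q i' j' k' l' s' := by
  obtain ⟨σ, rfl⟩ := exists_perm_eq_comp_of_range_eq hi hi' hrange
  rw [ecr_comp_perm]
  simp only [KleinianRelated, Prod.mk.injEq] at hklein
  rcases hklein with ⟨rfl, rfl, rfl, rfl⟩ | ⟨rfl, rfl, rfl, rfl⟩ | ⟨rfl, rfl, rfl, rfl⟩ |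
    ⟨rfl, rfl, rfl, rfl⟩
  · rfl
  · exact ecr_swap_jk_ls ..
  · exact ecr_swap_jl_ks ..
  · rw [ecr_swap_jk_ls, ecr_swap_jl_ks]

end Permutations

section GapCurve

open Polynomial in
/-- The monic polynomial with roots `v r` expresses `v r ^ (m + 1)` through lower powers. -/
theorem det_vandermonde_updateCol_last {R : Type*} [CommRing R] {m : ℕ} (v : Fin (m + 1) → R) :
    ((Matrix.vandermonde v).updateCol (Fin.last m) fun r => v r ^ (m + 1)).det =
      (∑ r, v r) * (Matrix.vandermonde v).det := by
  nontriviality R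
  set P : R[X] := ∏ r, (X - C (v r)) with hP
  have hmonic : P.Monic := monic_prod_X_sub_C _ _
  have hdeg : P.natDegree = m + 1 := by simp [hP, natDegree_prod_of_monic, monic_X_sub_C]
  have hcoeff : P.coeff m = -∑ r, v r := by
    simpa using prod_X_sub_C_coeff_card_pred Finset.univ v (by simp)
  have hpow (r : Fin (m + 1)) :
      v r ^ (m + 1) = ∑ c : Fin (m + 1), -P.coeff c • Matrix.vandermonde v r c := by
    have hroot : P.eval (v r) = 0 := by
      simp [hP, eval_prod, Finset.prod_eq_zero (Finset.mem_univ r)]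
    rw [eval_eq_sum_range, hdeg, Finset.sum_range_succ, ← hdeg, hmonic.coeff_natDegree, hdeg,
      one_mul, Finset.sum_range] at hroot
    simpa [Matrix.vandermonde_apply] using eq_neg_of_add_eq_zero_right hroot
  simp only [hpow]
  rw [Matrix.det_updateCol_sum (Matrix.vandermonde v) (Fin.last m) fun c => -P.coeff c,
    Fin.val_last, hcoeff, neg_neg, smul_eq_mul]

/-- The rational curve `z ↦ (z, z², …, z^M, z^{M+2})` in `ℂ^{M+1}`. Because the exponent `M + 1` is
omitted, `M + 2` distinct points of it lie on a hyperplane exactly when their parameters sum to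
zero. -/
def gapCurve (M : ℕ) (z : ℂ) : Fin (M + 1) → ℂ :=
  Fin.snoc (fun c : Fin M => z ^ ((c : ℕ) + 1)) (z ^ (M + 2))

variable {n M : ℕ}

theorem dA_eq_sign_mul_det_cons {m : ℕ} (q : Fin n → Fin m → ℂ) (a : Fin (m + 1) → Fin n) :
    dA q a = (Equiv.Perm.sign (finRotate (m + 1)) : ℤ) *
      (Matrix.of fun r => (Fin.cons 1 (q (a r)) : Fin (m + 1) → ℂ)).det := by
  rw [← Matrix.det_permute']
  simp only [dA, Fin.snoc_eq_cons_rotate]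
  rfl

theorem cons_one_gapCurve (v : Fin (M + 2) → ℂ) :
    (Matrix.of fun r => (Fin.cons 1 (gapCurve M (v r)) : Fin (M + 2) → ℂ)) =
      (Matrix.vandermonde v).updateCol (Fin.last (M + 1)) fun r => v r ^ (M + 2) := by
  ext r c
  cases c using Fin.cases with
  | zero => simp [Matrix.vandermonde_apply, (Fin.last_pos).ne]
  | succ c =>
    cases c using Fin.lastCases with
    | last => simp [gapCurve]
    | cast c =>
      simp [gapCurve, Matrix.vandermonde_apply, Fin.castSucc_ne_last, ← Fin.succ_last]

theorem dA_gapCurve_eq_zero_iff {x : Fin n → ℂ} (hx : x.Injective) {a : Fin (M + 2) → Fin n}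
    (ha : a.Injective) : dA (fun b => gapCurve M (x b)) a = 0 ↔ ∑ r, x (a r) = 0 := by
  have hvandermonde : (Matrix.vandermonde (x ∘ a)).det ≠ 0 :=
    Matrix.det_vandermonde_ne_zero_iff.2 (hx.comp ha)
  have hdet := (congrArg Matrix.det (cons_one_gapCurve (x ∘ a))).trans
    (det_vandermonde_updateCol_last _)
  simp only [Function.comp_apply] at hdet
  rw [dA_eq_sign_mul_det_cons, hdet]
  simp [hvandermonde]

theorem exists_genPos (n M : ℕ) : ∃ q : Fin n → Fin (M + 1) → ℂ, GenPos q := by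
  let x (b : Fin n) : ℂ := ((b : ℕ) + 1 : ℕ)
  have hx : x.Injective := fun b b' h => by simpa [x, Fin.ext_iff] using h
  refine ⟨fun b => gapCurve M (x b), fun a ha => ?_⟩
  rw [Ne, dA_gapCurve_eq_zero_iff hx ha]
  simp only [x, ← Nat.cast_sum, Nat.cast_eq_zero]
  exact (Finset.sum_pos (fun _ _ => Nat.succ_pos _) Finset.univ_nonempty).ne'

theorem sum_two_pow_eq_iff_range_eq {ι : Type*} [Fintype ι] {a b : ι → ℕ} (ha : a.Injective)
    (hb : b.Injective) : ∑ r, 2 ^ a r = ∑ r, 2 ^ b r ↔ Set.range a = Set.range b := by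
  have hsum {f : ι → ℕ} (hf : f.Injective) :
      ∑ r, 2 ^ f r = ∑ t ∈ Finset.univ.map ⟨f, hf⟩, 2 ^ t := by simp
  rw [hsum ha, hsum hb, (Finset.geomSum_injective le_rfl).eq_iff, ← Finset.coe_inj]
  simp

theorem exists_dA_eq_zero_iff_range_eq_range {S : Fin (M + 2) → Fin n} (hS : S.Injective) :
    ∃ q : Fin n → Fin (M + 1) → ℂ, ∀ a : Fin (M + 2) → Fin n, a.Injective →
      (dA q a = 0 ↔ Set.range a = Set.range S) := by
  let weight (a : Fin (M + 2) → Fin n) : ℕ := ∑ r, 2 ^ (a r : ℕ)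
  let x (b : Fin n) : ℂ := 2 ^ (b : ℕ) - weight S / (M + 2)
  have hx : x.Injective := fun b b' h => by
    have hpow : ((2 ^ (b : ℕ) : ℕ) : ℂ) = (2 ^ (b' : ℕ) : ℕ) := by simpa [x] using h
    exact Fin.ext (Nat.pow_right_injective le_rfl (Nat.cast_injective hpow))
  have hsum (a : Fin (M + 2) → Fin n) : ∑ r, x (a r) = weight a - weight S := by
    have hcard : (M : ℂ) + 2 ≠ 0 := by exact_mod_cast (M + 1).succ_ne_zero
    simp [x, weight, mul_div_cancel₀ _ hcard]
  refine ⟨fun b => gapCurve M (x b), fun a ha => ?_⟩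
  have hweight : weight a = weight S ↔
      Set.range (Fin.val ∘ a) = Set.range (Fin.val ∘ S) :=
    sum_two_pow_eq_iff_range_eq (Fin.val_injective.comp ha) (Fin.val_injective.comp hS)
  rw [dA_gapCurve_eq_zero_iff hx ha, hsum, sub_eq_zero, Nat.cast_inj, hweight,
    Set.range_comp, Set.range_comp, Fin.val_injective.image_injective.eq_iff]

theorem exists_dA_eq_zero_iff_range_eq (T : Set (Fin n)) :
    ∃ q : Fin n → Fin (M + 1) → ℂ, ∀ a : Fin (M + 2) → Fin n, a.Injective →
      (dA q a = 0 ↔ Set.range a = T) := by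
  by_cases hT : ∃ S : Fin (M + 2) → Fin n, S.Injective ∧ Set.range S = T
  · obtain ⟨S, hS, rfl⟩ := hT
    exact exists_dA_eq_zero_iff_range_eq_range hS
  · obtain ⟨q, hq⟩ := exists_genPos n M
    exact ⟨q, fun a ha => iff_of_false (hq a ha) fun haT => hT ⟨a, ha, haT⟩⟩

end GapCurve

section Density

theorem dense_setOf_ne_zero_of_analyticOnNhd {𝕜 E F : Type*} [NontriviallyNormedField 𝕜]
    [NormedAddCommGroup E] [NormedSpace 𝕜 E] [PreconnectedSpace E] [NormedAddCommGroup F]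
    [NormedSpace 𝕜 F] {f : E → F} (hf : AnalyticOnNhd 𝕜 f Set.univ) {x₀ : E} (hx₀ : f x₀ ≠ 0) :
    Dense {x | f x ≠ 0} := by
  intro x
  by_contra hx
  have hzero : f =ᶠ[nhds x] 0 := by
    simpa [mem_closure_iff_frequently, Filter.EventuallyEq] using hx
  exact hx₀ (congrFun (hf.eq_of_eventuallyEq analyticOnNhd_const hzero) x₀)

variable {n M m : ℕ}

theorem analyticOnNhd_dA (a : Fin (m + 1) → Fin n) :
    AnalyticOnNhd ℂ (fun q : Fin n → Fin m → ℂ => dA q a) Set.univ := by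
  intro q _
  have hentry (r c : Fin (m + 1)) : AnalyticAt ℂ
      (fun q : Fin n → Fin m → ℂ => (Fin.snoc (q (a r)) (1 : ℂ) : Fin (m + 1) → ℂ) c) q := by
    cases c using Fin.lastCases with
    | last => simpa using analyticAt_const
    | cast c =>
      have hproj : AnalyticAt ℂ (fun q : Fin n → Fin m → ℂ => q (a r) c) q :=
        ((ContinuousLinearMap.proj c : (Fin m → ℂ) →L[ℂ] ℂ).comp
          (ContinuousLinearMap.proj (a r) : (Fin n → Fin m → ℂ) →L[ℂ] Fin m → ℂ)).analyticAt q
      simpa using hproj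
  simp only [dA, Matrix.det_apply', Matrix.of_apply]
  fun_prop

theorem continuous_dA (a : Fin (m + 1) → Fin n) :
    Continuous fun q : Fin n → Fin m → ℂ => dA q a :=
  continuousOn_univ.1 (analyticOnNhd_dA a).continuousOn

theorem dense_setOf_genPos (n M : ℕ) : Dense {q : Fin n → Fin (M + 1) → ℂ | GenPos q} := by
  obtain ⟨q₀, hq₀⟩ := exists_genPos n M
  have hinter : {q : Fin n → Fin (M + 1) → ℂ | GenPos q} =
      ⋂ a ∈ {a : Fin (M + 2) → Fin n | a.Injective}, {q | dA q a ≠ 0} := by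
    ext q; simp [GenPos]
  rw [hinter]
  exact dense_biInter_of_isOpen (fun a _ => isOpen_ne_fun (continuous_dA a) continuous_const)
    (Set.to_countable _)
    fun a ha => dense_setOf_ne_zero_of_analyticOnNhd (analyticOnNhd_dA a) (hq₀ a ha)

theorem dA_mul_eq_of_div_eq_on_genPos {a₁ a₂ a₃ a₄ b₁ b₂ b₃ b₄ : Fin (M + 2) → Fin n}
    (ha₃ : a₃.Injective) (ha₄ : a₄.Injective) (hb₃ : b₃.Injective) (hb₄ : b₄.Injective)
    (h : ∀ q : Fin n → Fin (M + 1) → ℂ, GenPos q →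
      (dA q a₁ * dA q a₂) / (dA q a₃ * dA q a₄) = (dA q b₁ * dA q b₂) / (dA q b₃ * dA q b₄))
    (q : Fin n → Fin (M + 1) → ℂ) :
    dA q a₁ * dA q a₂ * (dA q b₃ * dA q b₄) = dA q b₁ * dA q b₂ * (dA q a₃ * dA q a₄) := by
  have hcont := continuous_dA (n := n) (m := M + 1)
  refine congrFun (Continuous.ext_on (dense_setOf_genPos n M)
    (((hcont a₁).mul (hcont a₂)).mul ((hcont b₃).mul (hcont b₄)))
    (((hcont b₁).mul (hcont b₂)).mul ((hcont a₃).mul (hcont a₄))) fun q hq => ?_) q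
  exact (div_eq_div_iff (mul_ne_zero (hq _ ha₃) (hq _ ha₄))
    (mul_ne_zero (hq _ hb₃) (hq _ hb₄))).1 (h q hq)

theorem pair_union_pair_eq_of_div_eq_on_genPos
    {a₁ a₂ a₃ a₄ b₁ b₂ b₃ b₄ : Fin (M + 2) → Fin n}
    (ha₁ : a₁.Injective) (ha₂ : a₂.Injective) (ha₃ : a₃.Injective) (ha₄ : a₄.Injective)
    (hb₁ : b₁.Injective) (hb₂ : b₂.Injective) (hb₃ : b₃.Injective) (hb₄ : b₄.Injective)
    (h : ∀ q : Fin n → Fin (M + 1) → ℂ, GenPos q →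
      (dA q a₁ * dA q a₂) / (dA q a₃ * dA q a₄) = (dA q b₁ * dA q b₂) / (dA q b₃ * dA q b₄)) :
    ({Set.range a₁, Set.range a₂} ∪ {Set.range b₃, Set.range b₄} : Set (Set (Fin n))) =
      {Set.range b₁, Set.range b₂} ∪ {Set.range a₃, Set.range a₄} := by
  ext T
  obtain ⟨q, hq⟩ := exists_dA_eq_zero_iff_range_eq (M := M) T
  have hzero := congrArg (· = 0) (dA_mul_eq_of_div_eq_on_genPos ha₃ ha₄ hb₃ hb₄ h q)
  simp only [mul_eq_zero, hq _ ha₁, hq _ ha₂, hq _ ha₃, hq _ ha₄, hq _ hb₁, hq _ hb₂, hq _ hb₃,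
    hq _ hb₄, eq_iff_iff] at hzero
  simpa only [Set.mem_union, Set.mem_insert_iff, Set.mem_singleton_iff, eq_comm (a := T)]
    using hzero

end Density

section Pairings

variable {α : Type*} {R R' : Set α} {j k l s j' k' l' s' : α}

theorem eq_and_eq_of_union_eq_union {A B A' B' : Set α} (h : A ∪ B' = A' ∪ B)
    (hAB : Disjoint A B) (hAB' : Disjoint A' B') : A = A' ∧ B = B' := by
  simp only [Set.disjoint_left, Set.ext_iff, Set.mem_union] at *
  grind

/-- The index sets `{𝐢, j, k}` and `{𝐢, l, s}` of the two determinants in the numerator of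
`e_{𝐢;j,k,l,s}`, where `R` is the set of entries of `𝐢`. Those in the denominator are
`pairing R j l k s`. -/
def pairing (R : Set α) (j k l s : α) : Set (Set α) :=
  {R ∪ {j, k}, R ∪ {l, s}}

theorem sInter_pairing (h : Disjoint ({j, k} : Set α) {l, s}) : ⋂₀ pairing R j k l s = R := by
  rw [pairing, Set.sInter_pair, ← Set.union_inter_distrib_left, h.inter_eq, Set.union_empty]

theorem image_sdiff_pairing (h : Disjoint R {j, k, l, s}) :
    (· \ R) '' pairing R j k l s = {{j, k}, {l, s}} := by
  have hjk : Disjoint R {j, k} := h.mono_right (by grind)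
  have hls : Disjoint R {l, s} := h.mono_right (by grind)
  rw [pairing, Set.image_pair, Set.union_sdiff_cancel_left hjk.inter_eq.subset,
    Set.union_sdiff_cancel_left hls.inter_eq.subset]

theorem disjoint_pairing (hR : Disjoint R {j, k, l, s}) (hnodup : [j, k, l, s].Nodup) :
    Disjoint (pairing R j k l s) (pairing R j l k s) := by
  have hR' : Disjoint R {j, l, k, s} := by rwa [Set.insert_comm l k]
  refine Disjoint.of_image (f := (· \ R)) ?_
  rw [image_sdiff_pairing hR, image_sdiff_pairing hR']
  simp only [Set.disjoint_insert_left, Set.disjoint_singleton_left, Set.mem_insert_iff,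
    Set.mem_singleton_iff, Set.pair_eq_pair_iff]
  grind

theorem kleinian_of_pair_pair_eq
    (h₁ : ({{j, k}, {l, s}} : Set (Set α)) = {{j', k'}, {l', s'}})
    (h₂ : ({{j, l}, {k, s}} : Set (Set α)) = {{j', l'}, {k', s'}}) :
    KleinianRelated (j, k, l, s) (j', k', l', s') := by
  simp only [Set.pair_eq_pair_iff] at h₁ h₂
  grind [KleinianRelated]

theorem eq_and_kleinian_of_pairing_union_eq
    (hR : Disjoint R {j, k, l, s}) (hnodup : [j, k, l, s].Nodup)
    (hR' : Disjoint R' {j', k', l', s'}) (hnodup' : [j', k', l', s'].Nodup)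
    (h : pairing R j k l s ∪ pairing R' j' l' k' s' =
      pairing R' j' k' l' s' ∪ pairing R j l k s) :
    R = R' ∧ KleinianRelated (j, k, l, s) (j', k', l', s') := by
  obtain ⟨hnum, hden⟩ := eq_and_eq_of_union_eq_union h (disjoint_pairing hR hnodup)
    (disjoint_pairing hR' hnodup')
  obtain rfl : R = R' := by
    rw [← sInter_pairing (R := R) (j := j) (k := k) (l := l) (s := s) (by grind), hnum,
      sInter_pairing (by grind)]
  refine ⟨rfl, kleinian_of_pair_pair_eq ?_ ?_⟩
  · rw [← image_sdiff_pairing hR, hnum, image_sdiff_pairing hR']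
  · rw [Set.insert_comm k l] at hR
    rw [Set.insert_comm k' l'] at hR'
    rw [← image_sdiff_pairing hR, hden, image_sdiff_pairing hR']

end Pairings

section CrossRatio

variable {α : Type*} {n M : ℕ}

theorem range_snoc_snoc (i : Fin M → α) (j k : α) :
    Set.range (Fin.snoc (Fin.snoc i j : Fin (M + 1) → α) k : Fin (M + 2) → α) =
      Set.range i ∪ {j, k} := by
  grind [Fin.range_snoc]

theorem injective_snoc_snoc_iff {i : Fin M → α} {j k : α} :
    (Fin.snoc (Fin.snoc i j : Fin (M + 1) → α) k : Fin (M + 2) → α).Injective ↔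
      i.Injective ∧ Disjoint (Set.range i) {j, k} ∧ [j, k].Nodup := by
  simp only [Fin.snoc_injective_iff, Fin.range_snoc]
  grind

theorem injective_snoc_snoc_snoc_snoc_iff {i : Fin M → α} {j k l s : α} :
    (Fin.snoc (Fin.snoc (Fin.snoc (Fin.snoc i j : Fin (M + 1) → α) k : Fin (M + 2) → α) l :
      Fin (M + 3) → α) s : Fin (M + 4) → α).Injective ↔
      i.Injective ∧ Disjoint (Set.range i) {j, k, l, s} ∧ [j, k, l, s].Nodup := by
  simp only [Fin.snoc_injective_iff, Fin.range_snoc, Set.mem_insert_iff, not_or,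
    Set.disjoint_insert_right, Set.disjoint_singleton_right, List.nodup_cons, List.mem_cons,
    List.not_mem_nil]
  grind

theorem injective_snoc_snoc_of_disjoint_of_nodup {i : Fin M → α} {j k l s : α} (hi : i.Injective)
    (hR : Disjoint (Set.range i) {j, k, l, s}) (hnodup : [j, k, l, s].Nodup) :
    (Fin.snoc (Fin.snoc i j : Fin (M + 1) → α) k : Fin (M + 2) → α).Injective ∧
      (Fin.snoc (Fin.snoc i l : Fin (M + 1) → α) s : Fin (M + 2) → α).Injective ∧
      (Fin.snoc (Fin.snoc i j : Fin (M + 1) → α) l : Fin (M + 2) → α).Injective ∧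
      (Fin.snoc (Fin.snoc i k : Fin (M + 1) → α) s : Fin (M + 2) → α).Injective := by
  refine ⟨?_, ?_, ?_, ?_⟩ <;>
    exact injective_snoc_snoc_iff.2 ⟨hi, hR.mono_right (by grind), by grind⟩

theorem pairing_union_eq_of_ecr_eq {i i' : Fin M → Fin n} {j k l s j' k' l' s' : Fin n}
    (hi : i.Injective) (hR : Disjoint (Set.range i) {j, k, l, s}) (hnodup : [j, k, l, s].Nodup)
    (hi' : i'.Injective) (hR' : Disjoint (Set.range i') {j', k', l', s'})
    (hnodup' : [j', k', l', s'].Nodup)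
    (h : ∀ q : Fin n → Fin (M + 1) → ℂ, GenPos q → ecr q i j k l s = ecr q i' j' k' l' s') :
    pairing (Set.range i) j k l s ∪ pairing (Set.range i') j' l' k' s' =
      pairing (Set.range i') j' k' l' s' ∪ pairing (Set.range i) j l k s := by
  obtain ⟨hjk, hls, hjl, hks⟩ := injective_snoc_snoc_of_disjoint_of_nodup hi hR hnodup
  obtain ⟨hjk', hls', hjl', hks'⟩ := injective_snoc_snoc_of_disjoint_of_nodup hi' hR' hnodup'
  simp only [pairing, ← range_snoc_snoc]
  exact pair_union_pair_eq_of_div_eq_on_genPos hjk hls hjl hks hjk' hls' hjl' hks' h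

end CrossRatio

/-- Two determinant cross ratios coincide as functions on `ℰⁿ(ℂ^m, gp)` iff their
essential supports coincide as sets and the last four indices differ by a Kleinian
permutation (the paper's `m` is `M + 1`, and `n ≥ m + 3`). -/
theorem dcr_eq_iff_kleinian {n M : ℕ} (hn : M + 4 ≤ n)
    (i i' : Fin M → Fin n) (j k l s j' k' l' s' : Fin n)
    (hdist : Function.Injective
      (Fin.snoc (Fin.snoc (Fin.snoc (Fin.snoc i j) k) l) s : Fin (M + 4) → Fin n))
    (hdist' : Function.Injective
      (Fin.snoc (Fin.snoc (Fin.snoc (Fin.snoc i' j') k') l') s' : Fin (M + 4) → Fin n)) :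
    (∀ q : Fin n → Fin (M + 1) → ℂ, GenPos q →
        ecr q i j k l s = ecr q i' j' k' l' s') ↔
      (Set.range i = Set.range i' ∧
        ((j', k', l', s') = (j, k, l, s) ∨ (j', k', l', s') = (k, j, s, l) ∨
          (j', k', l', s') = (l, s, j, k) ∨ (j', k', l', s') = (s, l, k, j))) := by
  obtain ⟨hi, hR, hnodup⟩ := injective_snoc_snoc_snoc_snoc_iff.1 hdist
  obtain ⟨hi', hR', hnodup'⟩ := injective_snoc_snoc_snoc_snoc_iff.1 hdist'
  refine ⟨fun h => ?_, fun ⟨hrange, hklein⟩ q _ => ecr_eq_of_kleinian hi hi' hrange hklein q⟩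
  exact eq_and_kleinian_of_pairing_union_eq hR hnodup hR' hnodup'
    (pairing_union_eq_of_ecr_eq hi hR hnodup hi' hR' hnodup' h)
end

section
/- If the ratio μ/μ' of two cross ratios μ = ((q_j−q_k)/(q_j−q_s)) : ((q_k−q_t)/(q_s−q_t)) and μ' = ((q_{j'}−q_{k'})/(q_{j'}−q_{s'})) : ((q_{k'}−q_{t'})/(q_{s'}−q_{t'})), as rational functions of the variables, is itself a cross ratio of four of the eight variables q_j,q_k,q_s,q_t,q_{j'},q_{k'},q_{s'},q_{t'}, then the index sets {j,k,s,t} and {j',k',s',t'} share exactly 3 elements. -/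
/-- The cross ratio of four variables `q_a, q_b, q_c, q_d`, as an element of the
field of rational functions `ℂ(q_1, ..., q_n)`:
`((q_a−q_b)(q_c−q_d))/((q_a−q_c)(q_b−q_d))`. -/
noncomputable def crossRatio {n : ℕ} (a b c d : Fin n) :
    FractionRing (MvPolynomial (Fin n) ℂ) :=
  let x : Fin n → FractionRing (MvPolynomial (Fin n) ℂ) := fun i =>
    algebraMap (MvPolynomial (Fin n) ℂ) _ (MvPolynomial.X i)
  ((x a - x b) * (x c - x d)) / ((x a - x c) * (x b - x d))

/-!
Write the hypothesis symmetrically: the cross ratios of three quadruples `u`, `v`, `w` have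
product `1`. The zeros and poles of a cross ratio lie along the hyperplanes `q_x = q_y` for the
four edges `{x, y}` of a 4-cycle on its indices. As the divisors cancel, each edge of one cycle has
both ends in one of the other two quadruples. If two indices of `u` are missing from `v`, the edges
at them therefore put all of `u` into `w`, and by symmetry all of `v` too; then `u` and `v` have
the same indices, which is absurd. If `u` and `v` have the same indices, so does `w`. Evaluate the
four variables at the equianharmonic points `0, 1, ω, ω²`: every cross ratio of these points, in
any order, has cube `-1`, so a product of three of them has cube `-1` and is not `1`.
-/

open Finset

section CrossProducts

variable {R S : Type*} [CommRing R] [CommRing S]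

/-- The numerator of the cross ratio of the quadruple `p`. -/
def crossNumer (p : Fin 4 → R) : R := (p 0 - p 1) * (p 2 - p 3)

/-- The denominator of the cross ratio of the quadruple `p`. -/
def crossDenom (p : Fin 4 → R) : R := (p 0 - p 2) * (p 1 - p 3)

lemma map_crossNumer (f : R →+* S) (p : Fin 4 → R) : f (crossNumer p) = crossNumer (f ∘ p) := by
  simp [crossNumer]

lemma map_crossDenom (f : R →+* S) (p : Fin 4 → R) : f (crossDenom p) = crossDenom (f ∘ p) := by
  simp [crossDenom]

/-- The right-hand side is the invariant `I` of the binary quartic with roots `p`; only its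
symmetry in the roots matters here. -/
lemma crossNumer_sq_sub_mul_add_crossDenom_sq (p : Fin 4 → R) :
    crossNumer p ^ 2 - crossNumer p * crossDenom p + crossDenom p ^ 2 =
      (p 0 * p 1 + p 0 * p 2 + p 0 * p 3 + p 1 * p 2 + p 1 * p 3 + p 2 * p 3) ^ 2
        - 3 * (∑ i, p i)
          * (p 0 * p 1 * p 2 + p 0 * p 1 * p 3 + p 0 * p 2 * p 3 + p 1 * p 2 * p 3)
        + 12 * ∏ i, p i := by
  simp only [crossNumer, crossDenom, Fin.sum_univ_four, Fin.prod_univ_four]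
  ring

variable [IsDomain R] {p : Fin 4 → R}

lemma crossNumer_eq_zero_iff : crossNumer p = 0 ↔ p 0 = p 1 ∨ p 2 = p 3 := by
  simp [crossNumer, sub_eq_zero]

lemma crossDenom_eq_zero_iff : crossDenom p = 0 ↔ p 0 = p 2 ∨ p 1 = p 3 := by
  simp [crossDenom, sub_eq_zero]

lemma crossNumer_ne_zero (hp : Function.Injective p) : crossNumer p ≠ 0 := by
  simp [crossNumer_eq_zero_iff, hp.eq_iff]

lemma crossDenom_ne_zero (hp : Function.Injective p) : crossDenom p ≠ 0 := by
  simp [crossDenom_eq_zero_iff, hp.eq_iff]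

-- The 4-cycle of a quadruple is `0 - 1 - 3 - 2 - 0`, so `i.rev` is the vertex opposite to `i`.
lemma not_crossNumer_eq_zero_iff_crossDenom_eq_zero {i l : Fin 4} (hli : l ≠ i)
    (hlrev : l ≠ i.rev) (hp : ∀ a b, p a = p b ↔ a = b ∨ s(a, b) = s(i, l)) :
    ¬(crossNumer p = 0 ↔ crossDenom p = 0) := by
  rw [crossNumer_eq_zero_iff, crossDenom_eq_zero_iff]
  simp only [hp]
  clear hp
  revert i l
  decide

lemma crossNumer_cube_eq_neg_crossDenom_cube [NeZero (2 : R)] (hsum : ∑ i, p i = 0)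
    (hsq : ∑ i, p i ^ 2 = 0) (hprod : ∏ i, p i = 0) :
    crossNumer p ^ 3 = -crossDenom p ^ 3 := by
  have hpairs : p 0 * p 1 + p 0 * p 2 + p 0 * p 3 + p 1 * p 2 + p 1 * p 3 + p 2 * p 3 = 0 := by
    refine (mul_eq_zero.mp ?_).resolve_left (two_ne_zero (α := R))
    rw [Fin.sum_univ_four] at hsum hsq
    linear_combination (p 0 + p 1 + p 2 + p 3) * hsum - hsq
  have hinvariant := crossNumer_sq_sub_mul_add_crossDenom_sq p
  rw [hpairs, hsum, hprod] at hinvariant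
  linear_combination (crossNumer p + crossDenom p) * hinvariant

end CrossProducts

section Equianharmonic

variable {R : Type*} [CommRing R] {ω : R}

/-- For a primitive cube root of unity `ω`, four points with equianharmonic cross ratio. -/
def equianharmonic (ω : R) : Fin 4 → R := ![0, 1, ω, ω ^ 2]

variable [IsDomain R]

lemma equianharmonic_injective (hω : IsPrimitiveRoot ω 3) :
    Function.Injective (equianharmonic ω) := by
  have hω0 : ω ≠ 0 := hω.ne_zero (by norm_num)
  have hω1 : ω ≠ 1 := hω.ne_one (by norm_num)
  have hωsq0 : ω ^ 2 ≠ 0 := pow_ne_zero 2 hω0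
  have hωsq1 : ω ^ 2 ≠ 1 := hω.pow_ne_one_of_pos_of_lt (by norm_num) (by norm_num)
  have hωsqω : ω ^ 2 ≠ ω := fun h => hω1 (mul_left_cancel₀ hω0 (by rw [← sq, h, mul_one]))
  intro i l h
  fin_cases i <;> fin_cases l <;>
    simp [equianharmonic, hω0, hω0.symm, hω1, hω1.symm, hωsq0.symm, hωsq1, hωsq1.symm, hωsqω,
      hωsqω.symm] at h ⊢

lemma crossNumer_equianharmonic_comp_perm_cube [NeZero (2 : R)] (hω : IsPrimitiveRoot ω 3)
    (σ : Equiv.Perm (Fin 4)) :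
    crossNumer (equianharmonic ω ∘ σ) ^ 3 = -crossDenom (equianharmonic ω ∘ σ) ^ 3 := by
  have hgeom : 1 + ω + ω ^ 2 = 0 := by
    simpa [Finset.sum_range_succ] using hω.geom_sum_eq_zero (by norm_num)
  apply crossNumer_cube_eq_neg_crossDenom_cube
  · rw [← hgeom, Function.comp_def, Equiv.sum_comp σ (equianharmonic ω)]
    simp [equianharmonic, Fin.sum_univ_four]
  · simp only [Function.comp_apply]
    rw [Equiv.sum_comp σ (equianharmonic ω · ^ 2)]
    simp only [equianharmonic, Fin.sum_univ_four, Matrix.cons_val]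
    linear_combination (1 - ω + ω ^ 2) * hgeom
  · rw [Function.comp_def, Equiv.prod_comp σ (equianharmonic ω)]
    simp [equianharmonic, Fin.prod_univ_four]

end Equianharmonic

lemma exists_forall_eq_iff_eq_or_sym2_eq {ι R : Type*} [Countable ι] [Infinite R] (x y : ι) :
    ∃ q : ι → R, ∀ a b, q a = q b ↔ a = b ∨ s(a, b) = s(x, y) := by
  classical
  obtain ⟨e, he⟩ := exists_injective_nat ι
  refine ⟨Infinite.natEmbedding R ∘ e ∘ Function.update id y x, fun a b => ?_⟩
  simp only [Function.comp_apply, (Infinite.natEmbedding R).injective.eq_iff, he.eq_iff,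
    Function.update_apply, id_eq, Sym2.eq_iff]
  grind

lemma exists_perm_forall_apply_eq {α ι : Type*} [Fintype α] {u v : α ↪ ι}
    (h : univ.map v = univ.map u) : ∃ σ : Equiv.Perm α, ∀ i, v i = u (σ i) := by
  have hrange : Set.range v = Set.range u := by
    simpa using congrArg (fun s : Finset ι => (s : Set ι)) h
  refine ⟨(Equiv.ofInjective v v.injective).trans
    ((Equiv.setCongr hrange).trans (Equiv.ofInjective u u.injective).symm), fun i => ?_⟩
  simp [Equiv.apply_ofInjective_symm]

lemma univ_map_vec_four {ι : Type*} [DecidableEq ι] {a b c d : ι}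
    (h : Function.Injective ![a, b, c, d]) :
    univ.map ⟨![a, b, c, d], h⟩ = {a, b, c, d} := by
  ext x
  simp [Fin.exists_fin_succ, eq_comm]

/-- The cross ratios of the variables indexed by `u`, `v` and `w` have product `1`, expressed by
clearing denominators and evaluating the variables in `R`. -/
def CrossRatioProdEqOne (R : Type*) [CommRing R] {ι : Type*} (u v w : Fin 4 ↪ ι) : Prop :=
  ∀ q : ι → R, crossNumer (q ∘ u) * crossNumer (q ∘ v) * crossNumer (q ∘ w) =
    crossDenom (q ∘ u) * crossDenom (q ∘ v) * crossDenom (q ∘ w)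

namespace CrossRatioProdEqOne

variable {R ι : Type*} [CommRing R] {u v w : Fin 4 ↪ ι}

lemma swap (h : CrossRatioProdEqOne R u v w) : CrossRatioProdEqOne R v u w :=
  fun q => by linear_combination h q

lemma rotate (h : CrossRatioProdEqOne R u v w) : CrossRatioProdEqOne R w u v :=
  fun q => by linear_combination h q

variable [IsDomain R]

lemma not_map_eq_and_map_eq [NeZero (2 : R)] {ω : R} (hω : IsPrimitiveRoot ω 3)
    (h : CrossRatioProdEqOne R u v w) :
    ¬(univ.map v = univ.map u ∧ univ.map w = univ.map u) := by
  rintro ⟨hv, hw⟩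
  let q : ι → R := Function.extend u (equianharmonic ω) 0
  have cube_and_ne_zero (v' : Fin 4 ↪ ι) (hv' : univ.map v' = univ.map u) :
      crossNumer (q ∘ v') ^ 3 = -crossDenom (q ∘ v') ^ 3 ∧ crossDenom (q ∘ v') ≠ 0 := by
    obtain ⟨σ, hσ⟩ := exists_perm_forall_apply_eq hv'
    have hqv' : q ∘ v' = equianharmonic ω ∘ σ := by
      ext i
      simp only [q, Function.comp_apply, hσ, u.injective.extend_apply]
    rw [hqv']
    exact ⟨crossNumer_equianharmonic_comp_perm_cube hω σ,
      crossDenom_ne_zero ((equianharmonic_injective hω).comp σ.injective)⟩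
  obtain ⟨hu_cube, hu_ne⟩ := cube_and_ne_zero u rfl
  obtain ⟨hv_cube, hv_ne⟩ := cube_and_ne_zero v hv
  obtain ⟨hw_cube, hw_ne⟩ := cube_and_ne_zero w hw
  have hcube := congrArg (· ^ 3) (h q)
  simp only [mul_pow, hu_cube, hv_cube, hw_cube] at hcube
  have hzero : 2 * (crossDenom (q ∘ u) * crossDenom (q ∘ v) * crossDenom (q ∘ w)) ^ 3 = 0 := by
    linear_combination -hcube
  exact mul_ne_zero two_ne_zero (pow_ne_zero 3 (mul_ne_zero (mul_ne_zero hu_ne hv_ne) hw_ne)) hzero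

variable [Infinite R] [Countable ι]

-- On a generic point of the hyperplane `q (u i) = q (u l)`, exactly one side of the identity would
-- vanish if neither `v` nor `w` contained both indices.
lemma mem_map_and_mem_map_or (h : CrossRatioProdEqOne R u v w) {i l : Fin 4} (hli : l ≠ i)
    (hlrev : l ≠ i.rev) :
    (u i ∈ univ.map v ∧ u l ∈ univ.map v) ∨ (u i ∈ univ.map w ∧ u l ∈ univ.map w) := by
  obtain ⟨q, hq⟩ := exists_forall_eq_iff_eq_or_sym2_eq (R := R) (u i) (u l)
  have comp_injective (v' : Fin 4 ↪ ι) (hv' : ¬(u i ∈ univ.map v' ∧ u l ∈ univ.map v')) :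
      Function.Injective (q ∘ v') := by
    intro a b hab
    rcases (hq _ _).mp hab with heq | hpair
    · exact v'.injective heq
    · have hmem (c : Fin 4) : v' c ∈ univ.map v' := mem_map_of_mem v' (mem_univ c)
      rcases Sym2.eq_iff.mp hpair with ⟨hi, hl⟩ | ⟨hl, hi⟩ <;>
        exact absurd ⟨hi ▸ hmem _, hl ▸ hmem _⟩ hv'
  have hqu (a b : Fin 4) : (q ∘ u) a = (q ∘ u) b ↔ a = b ∨ s(a, b) = s(i, l) := by
    simp [hq]
  by_contra! hnot
  obtain ⟨hv, hw⟩ := hnot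
  have hqv := comp_injective v (not_and.mpr hv)
  have hqw := comp_injective w (not_and.mpr hw)
  apply not_crossNumer_eq_zero_iff_crossDenom_eq_zero hli hlrev hqu
  simpa [crossNumer_ne_zero, crossDenom_ne_zero, hqv, hqw] using congrArg (· = 0) (h q)

lemma mem_map_of_notMem_map (h : CrossRatioProdEqOne R u v w) {i l : Fin 4}
    (hi : u i ∉ univ.map v) (hl : l ≠ i.rev) : u l ∈ univ.map w := by
  by_cases hli : l = i
  · subst hli
    obtain ⟨m, hml, hmrev⟩ : ∃ m, m ≠ l ∧ m ≠ l.rev := by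
      clear hi hl
      decide +revert
    exact ((h.mem_map_and_mem_map_or hml hmrev).resolve_left fun hv => hi hv.1).1
  · exact ((h.mem_map_and_mem_map_or hli hl).resolve_left fun hv => hi hv.1).2

variable [DecidableEq ι]

lemma map_subset_union_map (h : CrossRatioProdEqOne R u v w) :
    univ.map u ⊆ univ.map v ∪ univ.map w := by
  intro x hx
  obtain ⟨i, -, rfl⟩ := mem_map.mp hx
  have hrev : i ≠ i.rev := by
    clear hx
    decide +revert
  exact mem_union.mpr (or_iff_not_imp_left.mpr fun hi => h.mem_map_of_notMem_map hi hrev)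

lemma map_eq_of_one_lt_card_sdiff (h : CrossRatioProdEqOne R u v w)
    (hcard : 1 < #(univ.map u \ univ.map v)) : univ.map u = univ.map w := by
  refine eq_of_subset_of_card_le (fun x hx => ?_) (by simp)
  obtain ⟨l, -, rfl⟩ := mem_map.mp hx
  obtain ⟨y, hy, hyl⟩ := exists_mem_ne hcard (u l.rev)
  obtain ⟨hyu, hyv⟩ := mem_sdiff.mp hy
  obtain ⟨i, -, rfl⟩ := mem_map.mp hyu
  refine h.mem_map_of_notMem_map hyv ?_
  rintro rfl
  exact hyl (by rw [Fin.rev_rev])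

theorem card_map_inter_map [NeZero (2 : R)] {ω : R} (hω : IsPrimitiveRoot ω 3)
    (h : CrossRatioProdEqOne R u v w) : #(univ.map u ∩ univ.map v) = 3 := by
  have hsdiff_le : #(univ.map u \ univ.map v) ≤ 1 := by
    by_contra! hlt
    have huw := h.map_eq_of_one_lt_card_sdiff hlt
    have hvw := h.swap.map_eq_of_one_lt_card_sdiff (by rwa [card_sdiff_comm (by simp)])
    simp [huw, hvw] at hlt
  have hsdiff_ne : #(univ.map u \ univ.map v) ≠ 0 := by
    intro hzero
    have hvu : univ.map v = univ.map u :=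
      (eq_of_subset_of_card_le (sdiff_eq_empty_iff_subset.mp (card_eq_zero.mp hzero))
        (by simp)).symm
    have hwu : univ.map w = univ.map u :=
      eq_of_subset_of_card_le (by simpa [hvu] using h.rotate.map_subset_union_map) (by simp)
    exact h.not_map_eq_and_map_eq hω ⟨hvu, hwu⟩
  have hcard := card_sdiff_add_card_inter (univ.map u) (univ.map v)
  rw [card_map, card_univ, Fintype.card_fin] at hcard
  omega

end CrossRatioProdEqOne

section RationalFunctions

variable {n : ℕ}

lemma crossRatio_inv (a b c d : Fin n) : (crossRatio a b c d)⁻¹ = crossRatio a c b d := by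
  simp only [crossRatio, inv_div]

lemma crossRatio_eq_div (u : Fin 4 → Fin n) :
    crossRatio (u 0) (u 1) (u 2) (u 3) =
      algebraMap (MvPolynomial (Fin n) ℂ) _ (crossNumer (MvPolynomial.X ∘ u)) /
        algebraMap (MvPolynomial (Fin n) ℂ) _ (crossDenom (MvPolynomial.X ∘ u)) := by
  rw [map_crossNumer, map_crossDenom]
  rfl

lemma algebraMap_crossNumer_ne_zero (u : Fin 4 ↪ Fin n) :
    algebraMap (MvPolynomial (Fin n) ℂ) (FractionRing (MvPolynomial (Fin n) ℂ))
      (crossNumer (MvPolynomial.X ∘ u)) ≠ 0 := by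
  rw [map_ne_zero_iff _ (IsFractionRing.injective _ _)]
  exact crossNumer_ne_zero (MvPolynomial.X_injective.comp u.injective)

lemma algebraMap_crossDenom_ne_zero (u : Fin 4 ↪ Fin n) :
    algebraMap (MvPolynomial (Fin n) ℂ) (FractionRing (MvPolynomial (Fin n) ℂ))
      (crossDenom (MvPolynomial.X ∘ u)) ≠ 0 := by
  rw [map_ne_zero_iff _ (IsFractionRing.injective _ _)]
  exact crossDenom_ne_zero (MvPolynomial.X_injective.comp u.injective)

lemma crossRatio_ne_zero (u : Fin 4 ↪ Fin n) : crossRatio (u 0) (u 1) (u 2) (u 3) ≠ 0 := by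
  rw [crossRatio_eq_div]
  exact div_ne_zero (algebraMap_crossNumer_ne_zero u) (algebraMap_crossDenom_ne_zero u)

lemma crossRatioProdEqOne_of_mul_eq_one {u v w : Fin 4 ↪ Fin n}
    (h : crossRatio (u 0) (u 1) (u 2) (u 3) * crossRatio (v 0) (v 1) (v 2) (v 3) *
      crossRatio (w 0) (w 1) (w 2) (w 3) = 1) : CrossRatioProdEqOne ℂ u v w := by
  intro q
  rw [crossRatio_eq_div u, crossRatio_eq_div v, crossRatio_eq_div w, div_mul_div_comm,
    div_mul_div_comm, div_eq_one_iff_eq (by simp only [ne_eq, mul_eq_zero,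
      algebraMap_crossDenom_ne_zero, or_self, not_false_eq_true])] at h
  simp only [← map_mul] at h
  have heval := congrArg (MvPolynomial.eval q) (IsFractionRing.injective _ _ h)
  have heval_X (u' : Fin 4 → Fin n) :
      MvPolynomial.eval q ∘ MvPolynomial.X ∘ u' = q ∘ u' := by
    ext i
    simp
  simpa only [map_mul, map_crossNumer, map_crossDenom, heval_X] using heval

end RationalFunctions

/-- If the ratio `μ/μ'` of two cross ratios `μ = cr(q_j,q_k,q_s,q_t)` and
`μ' = cr(q_{j'},q_{k'},q_{s'},q_{t'})` is itself a cross ratio of four of the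
eight variables, then the index sets `{j,k,s,t}` and `{j',k',s',t'}` share exactly
three elements. -/
theorem ratio_of_cross_ratios {n : ℕ} (j k s t j' k' s' t' : Fin n)
    (h1 : Function.Injective ![j, k, s, t])
    (h2 : Function.Injective ![j', k', s', t'])
    (hcr : ∃ a b c d : Fin n, Function.Injective ![a, b, c, d] ∧
      ({a, b, c, d} : Set (Fin n)) ⊆ ({j, k, s, t, j', k', s', t'} : Set (Fin n)) ∧
      crossRatio j k s t / crossRatio j' k' s' t' = crossRatio a b c d) :
    (({j, k, s, t} : Finset (Fin n)) ∩ ({j', k', s', t'} : Finset (Fin n))).card = 3 := by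
  obtain ⟨a, b, c, d, h3, -, hratio⟩ := hcr
  let τ : Equiv.Perm (Fin 4) := Equiv.swap 1 2
  let u : Fin 4 ↪ Fin n := ⟨![j, k, s, t], h1⟩
  let v : Fin 4 ↪ Fin n := ⟨![j', k', s', t'], h2⟩
  let w : Fin 4 ↪ Fin n := ⟨![a, b, c, d], h3⟩
  have hmul : crossRatio j k s t * crossRatio j' s' k' t' * crossRatio a c b d = 1 := by
    rw [← crossRatio_inv j' k', ← crossRatio_inv a b,
      ← div_eq_mul_inv (crossRatio j k s t), hratio]
    exact mul_inv_cancel₀ (crossRatio_ne_zero w)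
  have hprod : CrossRatioProdEqOne ℂ u (τ.toEmbedding.trans v) (τ.toEmbedding.trans w) :=
    crossRatioProdEqOne_of_mul_eq_one hmul
  have hcard := hprod.card_map_inter_map (Complex.isPrimitiveRoot_exp 3 (by norm_num))
  rwa [← map_map, univ_map_equiv_to_embedding, univ_map_vec_four, univ_map_vec_four] at hcard
end
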